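/- arXiv:1911.08458 — 3 statements merged into one kernel-verified Lean document; each statement's English description precedes it below -/
import Mathlib

section
/- The number of positive integers b with φ(b) ≤ B is asymptotically (ζ(2)ζ(3)/ζ(6))·B; precisely, lim_{B→∞} |Ψ_B|/B = ζ(2)ζ(3)/ζ(6). -/
/-!
Write `f(n) = n / φ(n) = ∑_{d ∣ n} k(d)` with `k = μ² / φ ≥ 0`; then `φ(n) ≤ B` says `n ≤ B f(n)`.
Let `f_y` be the truncation of this divisor sum to `d ≤ y`. It is periodic modulo `y!` with mean
`M_y = ∑_{d ≤ y} k(d) / d`, so splitting into residue classes shows that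
`#{n ≥ 1 : n ≤ B f_y(n)} / B → M_y` (`truncSet_tendsto`). As `y → ∞`, `M_y` tends to
`∑ k(d) / d = ∏_p (1 + 1 / (p (p - 1))) = ζ(2) ζ(3) / ζ(6)` (`tsum_totWeight_div`).

Since `f_y ≤ f`, the truncated counts are lower bounds. For the upper bound
(`PsiSet_ncard_le`), an `n ≤ B f(n)` with `n > (1 + ε) B f_y(n)` has `n ≥ B` (as `f_y ≥ 1`) and
`f(n) - f_y(n) ≥ ε n / ((1 + ε) B)`. By Chebyshev's inequality the number of such `n` is at most
`((1 + ε) B / ε)² ∑_{n ≥ B} (f(n) - f_y(n))² / n²`. Expanding the square and using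
`∑_{n ≥ B, l ∣ n} 1 / n² ≤ 2 / (B l)` with `l = lcm(d, e) ≥ √(d e)`, the sum is at most
`(2 / B) (∑_{d > y} k(d) / √d)²` (`sum_tail_sq_le`). The series `∑ k(d) / √d` converges because
`n / φ(n) = O(n^{1/4})` (`totRatio_le`), so the bound is `B` times a quantity that
tends to `0` as `y → ∞` for fixed `ε`.
-/


open Filter Real

/-- The real value of the Riemann zeta function at a natural number argument. -/
noncomputable def zetaR (k : ℕ) : ℝ := (riemannZeta k).re

/-- The denominator set `Ψ_B`: positive integers whose totient is at most `B`. -/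
def PsiSet (B : ℝ) : Set ℕ := {b : ℕ | 0 < b ∧ (Nat.totient b : ℝ) ≤ B}

/-! ### The ratio `n / φ(n)` as a divisor sum -/

/-- The function `μ² / φ`, i.e. the nonnegative weight with `n / φ(n) = ∑_{d ∣ n} totWeight d`.
Its value at `0` is `0`, since `0` is not squarefree. -/
noncomputable def totWeight (d : ℕ) : ℝ := if Squarefree d then ((Nat.totient d : ℝ))⁻¹ else 0

/-- The ratio `n / φ(n)`, with value `0` at `n = 0`. -/
noncomputable def totRatio (n : ℕ) : ℝ := (n : ℝ) / (Nat.totient n : ℝ)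

/-- The truncation of `n / φ(n) = ∑_{d ∣ n} totWeight d` to divisors `d ≤ y`. Since `n = 0` is
divisible by every `d`, this function of `n` is periodic modulo `y!` on all of `ℕ`. -/
noncomputable def truncRatio (y n : ℕ) : ℝ :=
  ∑ d ∈ Finset.Icc 1 y, if d ∣ n then totWeight d else 0

lemma totWeight_nonneg (d : ℕ) : 0 ≤ totWeight d := by
  unfold totWeight; split_ifs <;> positivity

lemma totWeight_zero : totWeight 0 = 0 := by simp [totWeight]

lemma totWeight_one : totWeight 1 = 1 := by simp [totWeight]

lemma totWeight_mul {m n : ℕ} (h : m.Coprime n) :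
    totWeight (m * n) = totWeight m * totWeight n := by
  unfold totWeight
  simp only [Nat.squarefree_mul h, Nat.totient_mul h]
  by_cases h1 : Squarefree m <;> by_cases h2 : Squarefree n <;> simp [h1, h2, mul_comm]

lemma totWeight_prime {p : ℕ} (hp : p.Prime) : totWeight p = ((p : ℝ) - 1)⁻¹ := by
  rw [totWeight, if_pos hp.prime.squarefree, Nat.totient_prime hp, Nat.cast_pred hp.pos]

lemma totWeight_prime_pow {p e : ℕ} (hp : p.Prime) (he : 2 ≤ e) : totWeight (p ^ e) = 0 := by
  rw [totWeight, if_neg]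
  intro h
  have := (Nat.squarefree_pow_iff hp.ne_one (by omega)).1 h
  omega

/-- Both sides are multiplicative, so it suffices to compare them at prime powers. At `n = 0` both
sides are `0`. -/
lemma totRatio_eq_sum (n : ℕ) :
    totRatio n = ∑ d ∈ n.divisors, totWeight d := by
  let K : ArithmeticFunction ℝ := ⟨totWeight, totWeight_zero⟩
  let F : ArithmeticFunction ℝ := ⟨totRatio, by simp [totRatio]⟩
  have hK : K.IsMultiplicative := ⟨totWeight_one, fun h => totWeight_mul h⟩
  have hF : F.IsMultiplicative := ⟨by simp [F, totRatio], fun {m n} h => by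
    simp only [F, totRatio, ArithmeticFunction.coe_mk, Nat.totient_mul h]
    push_cast
    rw [mul_div_mul_comm]⟩
  have key : F = K * (ArithmeticFunction.zeta : ArithmeticFunction ℝ) := by
    rw [ArithmeticFunction.IsMultiplicative.eq_iff_eq_on_prime_powers F hF _
      (hK.mul ArithmeticFunction.isMultiplicative_zeta.natCast)]
    intro p e hp
    rw [ArithmeticFunction.coe_mul_zeta_apply, Nat.sum_divisors_prime_pow hp]
    simp only [F, K, ArithmeticFunction.coe_mk]
    have hp1 : (1 : ℝ) < p := by exact_mod_cast hp.one_lt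
    rcases e with _ | e
    · simp [totRatio, totWeight_one]
    · rw [Finset.sum_range_succ', Finset.sum_range_succ', Finset.sum_eq_zero]
      · simp only [totRatio, pow_zero, totWeight_one, zero_add, pow_one, totWeight_prime hp,
          Nat.totient_prime_pow_succ hp]
        push_cast [Nat.cast_pred hp.pos]
        have : (p : ℝ) - 1 ≠ 0 := by linarith
        have : (p : ℝ) ≠ 0 := by linarith
        field_simp
        ring
      · intro i _
        exact totWeight_prime_pow hp (by omega)
  calc totRatio n = F n := rfl
    _ = ∑ d ∈ n.divisors, K d := by rw [key, ArithmeticFunction.coe_mul_zeta_apply]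
    _ = _ := rfl

/-! ### Growth of `n / φ(n)` and convergence of the weights -/

/-- The `i`-th smallest element of `s` is at least `i + 1`, so the product is bounded by the
telescoping product of the `(i + 1) / i`. -/
lemma prod_div_pred_le (s : Finset ℕ) :
    (∀ p ∈ s, 2 ≤ p) →
    ∏ p ∈ s, ((p : ℝ) / ((p : ℝ) - 1)) ≤ s.card + 1 := by
  induction s using Finset.induction_on_max with
  | empty => simp
  | insert m s hm ih =>
    intro h
    have hms : m ∉ s := fun hh => lt_irrefl _ (hm m hh)
    have hi := ih fun p hp => h p (Finset.mem_insert_of_mem hp)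
    have hc : s.card + 2 ≤ m := by
      have hm2 := h m (Finset.mem_insert_self _ _)
      have : s ⊆ Finset.Ico 2 m := fun p hp =>
        Finset.mem_Ico.2 ⟨h p (Finset.mem_insert_of_mem hp), hm p hp⟩
      have := Finset.card_le_card this
      rw [Nat.card_Ico] at this
      omega
    have hc' : (s.card : ℝ) + 2 ≤ m := by exact_mod_cast hc
    have hs0 : (0 : ℝ) ≤ s.card := by positivity
    rw [Finset.prod_insert hms, Finset.card_insert_of_notMem hms]
    have h1 : (m : ℝ) / ((m : ℝ) - 1) ≤ (s.card + 2) / (s.card + 1) := by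
      rw [div_le_div_iff₀ (by linarith) (by linarith)]
      nlinarith
    calc _ ≤ ((s.card : ℝ) + 2) / (s.card + 1) * (s.card + 1) := by
          refine mul_le_mul h1 hi ?_ (by positivity)
          refine Finset.prod_nonneg fun p hp => ?_
          have : (2 : ℝ) ≤ p := by exact_mod_cast h p (Finset.mem_insert_of_mem hp)
          exact div_nonneg (by linarith) (by linarith)
      _ = _ := by push_cast; field_simp; ring

/-- In fact `n / φ(n) ≤ 1 + ω(n) ≤ 1 + log₂ n`; any exponent below `1 / 2` is enough for the
convergence of `∑ totWeight d / √d`. -/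
lemma totRatio_le : ∃ C : ℝ, 0 < C ∧ ∀ n : ℕ, totRatio n ≤ C * (n : ℝ) ^ (1 / 4 : ℝ) := by
  have hl2 : 0 < Real.log 2 := Real.log_pos (by norm_num)
  refine ⟨1 + 4 / Real.log 2, by positivity, fun n => ?_⟩
  rcases Nat.eq_zero_or_pos n with rfl | hn
  · simp [totRatio]
  have hn1 : (1 : ℝ) ≤ n := by exact_mod_cast hn
  have h2 : ∀ p ∈ n.primeFactors, 2 ≤ p := fun p hp => (Nat.prime_of_mem_primeFactors hp).two_le
  have h1 : totRatio n = ∏ p ∈ n.primeFactors, ((p : ℝ) / ((p : ℝ) - 1)) := by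
    have := congrArg (Nat.cast (R := ℝ)) (Nat.totient_mul_prod_primeFactors n)
    push_cast at this
    have e : ∏ p ∈ n.primeFactors, ((p - 1 : ℕ) : ℝ) = ∏ p ∈ n.primeFactors, ((p : ℝ) - 1) :=
      Finset.prod_congr rfl fun p hp => Nat.cast_pred (Nat.prime_of_mem_primeFactors hp).pos
    rw [e] at this
    rw [Finset.prod_div_distrib, totRatio, div_eq_div_iff]
    · rw [← this]; ring
    · exact_mod_cast (Nat.totient_pos.2 hn).ne'
    · refine Finset.prod_ne_zero_iff.2 fun p hp => ?_
      have : (2 : ℝ) ≤ p := by exact_mod_cast h2 p hp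
      linarith
  have h3 : (2 : ℕ) ^ n.primeFactors.card ≤ n :=
    (Finset.pow_card_le_prod _ (fun p => p) 2 h2).trans
      (Nat.le_of_dvd hn (Nat.prod_primeFactors_dvd n))
  have h4 : (n.primeFactors.card : ℝ) * Real.log 2 ≤ Real.log n := by
    rw [← Real.log_pow]
    exact Real.log_le_log (by positivity) (by exact_mod_cast h3)
  have h5 := Real.log_le_rpow_div (x := n) (ε := 1 / 4) (by positivity) (by norm_num)
  have h6 : (1 : ℝ) ≤ (n : ℝ) ^ (1 / 4 : ℝ) := Real.one_le_rpow hn1 (by norm_num)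
  have h7 := prod_div_pred_le _ h2
  rw [h1]
  have h8 : (n.primeFactors.card : ℝ) ≤ 4 / Real.log 2 * (n : ℝ) ^ (1 / 4 : ℝ) := by
    rw [div_mul_eq_mul_div, le_div_iff₀ hl2]
    linarith
  linarith

lemma summable_totWeight_div_sqrt : Summable fun d : ℕ => totWeight d / √(d : ℝ) := by
  obtain ⟨C, hC, h⟩ := totRatio_le
  have hs : Summable fun d : ℕ => C * (1 / (d : ℝ) ^ (5 / 4 : ℝ)) :=
    (Real.summable_one_div_nat_rpow.2 (by norm_num)).mul_left C
  refine Summable.of_nonneg_of_le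
    (fun d => div_nonneg (totWeight_nonneg d) (Real.sqrt_nonneg _)) (fun d => ?_) hs
  rcases Nat.eq_zero_or_pos d with rfl | hd
  · simp [totWeight_zero]
  have hd0 : (0 : ℝ) < d := by exact_mod_cast hd
  have hφ : (0 : ℝ) < Nat.totient d := by exact_mod_cast Nat.totient_pos.2 hd
  have h1 : totWeight d ≤ totRatio d / d := by
    have : totRatio d / d = (Nat.totient d : ℝ)⁻¹ := by
      unfold totRatio; field_simp
    rw [this, totWeight]
    split_ifs
    · exact le_rfl
    · positivity
  calc totWeight d / √(d : ℝ) ≤ (C * (d : ℝ) ^ (1 / 4 : ℝ)) / d / √(d : ℝ) := by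
        gcongr
        exact h1.trans (by gcongr; exact h d)
    _ = C * (1 / (d : ℝ) ^ (5 / 4 : ℝ)) := by
        have : (d : ℝ) * √(d : ℝ) = (d : ℝ) ^ (1 / 4 : ℝ) * (d : ℝ) ^ (5 / 4 : ℝ) := by
          rw [Real.sqrt_eq_rpow, ← Real.rpow_add hd0, ← Real.rpow_one_add' hd0.le (by norm_num)]
          norm_num
        rw [div_div, this]
        field_simp

lemma summable_totWeight_div : Summable fun d : ℕ => totWeight d / (d : ℝ) := by
  refine Summable.of_nonneg_of_le
    (fun d => div_nonneg (totWeight_nonneg d) (by positivity)) (fun d => ?_)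
    summable_totWeight_div_sqrt
  rcases Nat.eq_zero_or_pos d with rfl | hd
  · simp
  have hd0 : (1 : ℝ) ≤ d := by exact_mod_cast hd
  refine div_le_div_of_nonneg_left (totWeight_nonneg d) (by positivity) ?_
  rw [Real.sqrt_le_left (by linarith)]
  nlinarith

/-! ### Counting with the truncated ratio -/

lemma truncRatio_nonneg (y n : ℕ) : 0 ≤ truncRatio y n :=
  Finset.sum_nonneg fun d _ => by split_ifs <;> simp [totWeight_nonneg]

lemma truncRatio_le (y n : ℕ) : truncRatio y n ≤ ∑ d ∈ Finset.Icc 1 y, totWeight d :=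
  Finset.sum_le_sum fun d _ => by split_ifs <;> simp [totWeight_nonneg]

lemma truncRatio_mod (y n : ℕ) : truncRatio y (n % y.factorial) = truncRatio y n := by
  refine Finset.sum_congr rfl fun d hd => ?_
  rw [Finset.mem_Icc] at hd
  simp only [Nat.dvd_mod_iff (Nat.dvd_factorial hd.1 hd.2)]

lemma card_Ioc_modEq_bound {P : ℕ} (hP : 0 < P) {a : ℕ} {x : ℝ} (hx : 0 ≤ x) :
    |(((Finset.Ioc 0 ⌊x⌋₊).filter (fun n => n % P = a % P)).card : ℝ) - x / P| ≤ 3 := by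
  have h := Nat.Ioc_filter_modEq_card 0 ⌊x⌋₊ hP a
  have hP' : (0 : ℝ) < P := by exact_mod_cast hP
  have e : ((Finset.Ioc 0 ⌊x⌋₊).filter (fun n => n % P = a % P)) =
    ((Finset.Ioc 0 ⌊x⌋₊).filter (fun n => n ≡ a [MOD P])) := rfl
  rw [e]
  set c := ((Finset.Ioc 0 ⌊x⌋₊).filter (fun n => n ≡ a [MOD P])).card with hc
  have hm : ((0 : ℕ) - a : ℚ) / P ≤ ((⌊x⌋₊ : ℕ) - a : ℚ) / P := by
    gcongr; exact Nat.zero_le _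
  rw [max_eq_left (sub_nonneg.2 (Int.floor_le_floor hm))] at h
  have b1 := Int.floor_le (((⌊x⌋₊ : ℕ) - a : ℚ) / P)
  have b2 := Int.lt_floor_add_one (((⌊x⌋₊ : ℕ) - a : ℚ) / P)
  have b3 := Int.floor_le (((0 : ℕ) - a : ℚ) / P)
  have b4 := Int.lt_floor_add_one (((0 : ℕ) - a : ℚ) / P)
  have hq : (c : ℚ) = (⌊((⌊x⌋₊ : ℕ) - a : ℚ) / P⌋ : ℚ) - (⌊((0 : ℕ) - a : ℚ) / P⌋ : ℚ) := by
    exact_mod_cast h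
  have d0 : ((⌊x⌋₊ : ℕ) - a : ℚ) / P - ((0 : ℕ) - a : ℚ) / P = (⌊x⌋₊ : ℚ) / P := by
    rw [← sub_div]; congr 1; push_cast; ring
  have u : (c : ℚ) ≤ (⌊x⌋₊ : ℚ) / P + 1 := by linarith
  have l : (⌊x⌋₊ : ℚ) / P - 1 ≤ (c : ℚ) := by linarith
  have u' : (c : ℝ) ≤ (⌊x⌋₊ : ℝ) / P + 1 := by
    have := (Rat.cast_le (K := ℝ)).2 u
    push_cast at this
    exact this
  have l' : (⌊x⌋₊ : ℝ) / P - 1 ≤ (c : ℝ) := by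
    have := (Rat.cast_le (K := ℝ)).2 l
    push_cast at this
    exact this
  have f1 : (⌊x⌋₊ : ℝ) / P ≤ x / P := by gcongr; exact Nat.floor_le hx
  have f2 : x / P ≤ (⌊x⌋₊ : ℝ) / P + 1 := by
    have : x ≤ ⌊x⌋₊ + 1 := (Nat.lt_floor_add_one x).le
    have hP1 : (1 : ℝ) ≤ P := by exact_mod_cast hP
    rw [div_add_one hP'.ne']
    gcongr
    linarith
  rw [abs_le]
  constructor <;> linarith

lemma card_dvd_range {P d : ℕ} (hd : d ∣ P) (hP : 0 < P) :
    (((Finset.range P).filter (fun n => d ∣ n)).card : ℝ) = P / d := by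
  obtain ⟨m, rfl⟩ := hd
  have hd0 : 0 < d := Nat.pos_of_mul_pos_right hP
  have : (Finset.range (d * m)).filter (fun n => d ∣ n) = (Finset.range m).image (d * ·) := by
    ext n
    simp only [Finset.mem_filter, Finset.mem_range, Finset.mem_image]
    constructor
    · rintro ⟨h, k, rfl⟩
      exact ⟨k, Nat.lt_of_mul_lt_mul_left h, rfl⟩
    · rintro ⟨k, hk, rfl⟩
      exact ⟨Nat.mul_lt_mul_of_pos_left hk hd0, Dvd.intro _ rfl⟩
  rw [this, Finset.card_image_of_injective _ (mul_right_injective₀ hd0.ne'), Finset.card_range]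
  have : (d : ℝ) ≠ 0 := by positivity
  push_cast
  field_simp

/-- The mean of `truncRatio y` over one period is `∑_{d ≤ y} totWeight d / d`. -/
lemma sum_truncRatio (y : ℕ) :
    ∑ a ∈ Finset.range y.factorial, truncRatio y a =
      y.factorial * ∑ d ∈ Finset.Icc 1 y, totWeight d / d := by
  unfold truncRatio
  rw [Finset.sum_comm, Finset.mul_sum]
  refine Finset.sum_congr rfl fun d hd => ?_
  rw [Finset.mem_Icc] at hd
  rw [← Finset.sum_filter, Finset.sum_const, nsmul_eq_mul,
    card_dvd_range (Nat.dvd_factorial hd.1 hd.2) y.factorial_pos]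
  ring

/-- The analogue of `PsiSet B` in which `n / φ(n)` is replaced by `truncRatio y n`; recall that
`φ(n) ≤ B` means `n ≤ B * (n / φ(n))`. -/
def truncSet (y : ℕ) (B : ℝ) : Set ℕ := {n | 0 < n ∧ (n : ℝ) ≤ B * truncRatio y n}

lemma truncSet_finite (y : ℕ) {B : ℝ} (hB : 0 ≤ B) : (truncSet y B).Finite := by
  refine (Set.finite_Iic ⌊B * ∑ d ∈ Finset.Icc 1 y, totWeight d⌋₊).subset fun n hn => ?_
  exact Nat.le_floor (hn.2.trans (mul_le_mul_of_nonneg_left (truncRatio_le y n) hB))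

/-- On each residue class modulo `y!` the condition defining `truncSet y B` is `n ≤ x` for a fixed
`x`, so the count there is `x / y!` up to a bounded error. -/
lemma truncSet_ncard (y : ℕ) {B : ℝ} (hB : 0 ≤ B) :
    |((truncSet y B).ncard : ℝ) - B * ∑ d ∈ Finset.Icc 1 y, totWeight d / d| ≤
      3 * y.factorial := by
  set P := y.factorial with hPdef
  have hP : 0 < P := y.factorial_pos
  have hP' : (0 : ℝ) < P := by exact_mod_cast hP
  have hfin := truncSet_finite y hB
  have hcard : (truncSet y B).ncard = ∑ a ∈ Finset.range P,
      ((Finset.Ioc 0 ⌊B * truncRatio y a⌋₊).filter (fun n => n % P = a % P)).card := by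
    rw [Set.ncard_eq_toFinset_card _ hfin, Finset.card_eq_sum_card_fiberwise (f := (· % P))
      (t := Finset.range P) (fun n _ => by simpa using Nat.mod_lt _ hP)]
    refine Finset.sum_congr rfl fun a ha => congrArg Finset.card ?_
    ext n
    have ha' : a % P = a := Nat.mod_eq_of_lt (Finset.mem_range.1 ha)
    simp only [Finset.mem_filter, Set.Finite.mem_toFinset, Finset.mem_Ioc, truncSet,
      Set.mem_ofPred_eq, ha']
    refine and_congr_left fun h => and_congr_right fun h0 => ?_
    rw [Nat.le_floor_iff (mul_nonneg hB (truncRatio_nonneg y a)), ← h, truncRatio_mod]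
  have hmean : B * ∑ d ∈ Finset.Icc 1 y, totWeight d / d =
      ∑ a ∈ Finset.range P, B * truncRatio y a / P := by
    rw [← Finset.sum_div, ← Finset.mul_sum, sum_truncRatio, ← hPdef]
    field_simp
  rw [hcard, hmean, Nat.cast_sum, ← Finset.sum_sub_distrib]
  refine (Finset.abs_sum_le_sum_abs _ _).trans ((Finset.sum_le_sum fun a _ =>
    card_Ioc_modEq_bound hP (mul_nonneg hB (truncRatio_nonneg y a))).trans ?_)
  simp [mul_comm]

lemma truncSet_tendsto (y : ℕ) :
    Tendsto (fun B : ℝ => ((truncSet y B).ncard : ℝ) / B) atTop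
      (nhds (∑ d ∈ Finset.Icc 1 y, totWeight d / d)) := by
  rw [tendsto_iff_norm_sub_tendsto_zero]
  refine squeeze_zero' (g := fun B : ℝ => 3 * y.factorial / B)
    (Eventually.of_forall fun B => norm_nonneg _) ?_ (tendsto_const_nhds.div_atTop tendsto_id)
  filter_upwards [eventually_gt_atTop 0] with B hB
  rw [Real.norm_eq_abs, div_sub' hB.ne', abs_div, abs_of_pos hB]
  gcongr
  exact truncSet_ncard y hB.le

/-! ### The constant `ζ(2)ζ(3)/ζ(6)` -/

lemma zetaR_eq_tsum {k : ℕ} (hk : 1 < k) : zetaR k = ∑' n : ℕ, 1 / (n : ℝ) ^ k := by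
  rw [zetaR, zeta_nat_eq_tsum_of_gt_one hk]
  have : ∑' n : ℕ, 1 / (n : ℂ) ^ k = ((∑' n : ℕ, 1 / (n : ℝ) ^ k : ℝ) : ℂ) := by
    push_cast; rfl
  rw [this, Complex.ofReal_re]

lemma zetaR_pos {k : ℕ} (hk : 1 < k) : 0 < zetaR k := by
  rw [zetaR_eq_tsum hk]
  exact (Real.summable_one_div_nat_pow.2 hk).tsum_pos (fun n => by positivity) 1 (by norm_num)

lemma zetaR_hasProd {k : ℕ} (hk : 1 < k) :
    HasProd (fun p : Nat.Primes => (1 - 1 / ((p : ℕ) : ℝ) ^ k)⁻¹) (zetaR k) := by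
  let f : ℕ →*₀ ℝ :=
    { toFun := fun n => 1 / (n : ℝ) ^ k
      map_zero' := by simp [show k ≠ 0 by omega]
      map_one' := by simp
      map_mul' := fun m n => by push_cast; rw [mul_pow, one_div_mul_one_div] }
  have hs : Summable fun n => ‖f n‖ := (Real.summable_one_div_nat_pow.2 hk).norm
  have := EulerProduct.eulerProduct_completely_multiplicative_hasProd hs
  rw [zetaR_eq_tsum hk]
  exact this

/-- The Euler factor at `p` on the left is
`1 + 1 / (p (p - 1)) = (1 - p⁻⁶) / ((1 - p⁻²) (1 - p⁻³))`. -/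
lemma tsum_totWeight_div :
    ∑' d : ℕ, totWeight d / (d : ℝ) = zetaR 2 * zetaR 3 / zetaR 6 := by
  have h1 : HasProd (fun p : Nat.Primes =>
      ∑' e : ℕ, totWeight ((p : ℕ) ^ e) / (((p : ℕ) ^ e : ℕ) : ℝ))
      (∑' d : ℕ, totWeight d / (d : ℝ)) := by
    refine EulerProduct.eulerProduct_hasProd (f := fun d : ℕ => totWeight d / (d : ℝ))
      (by simp [totWeight_one]) (fun {m n} h => ?_) summable_totWeight_div.norm (by simp)
    simp only [totWeight_mul h, Nat.cast_mul]
    rw [mul_div_mul_comm]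
  rw [eq_div_iff (zetaR_pos (by norm_num)).ne']
  refine (h1.mul (zetaR_hasProd (k := 6) (by norm_num))).unique ?_
  convert! (zetaR_hasProd (k := 2) (by norm_num)).mul (zetaR_hasProd (k := 3) (by norm_num)) using 2
  rename_i p
  obtain ⟨p, hp⟩ := p
  have hp1 : (1 : ℝ) < p := by exact_mod_cast hp.one_lt
  rw [tsum_eq_sum (s := Finset.range 2)]
  · simp only [Finset.sum_range_succ, Finset.sum_range_zero, pow_zero, pow_one, totWeight_one,
      totWeight_prime hp, Nat.cast_one]
    have h0 : (p : ℝ) ≠ 0 := by linarith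
    have ha : (p : ℝ) - 1 ≠ 0 := by linarith
    have hk : ∀ k : ℕ, k ≠ 0 → (p : ℝ) ^ k - 1 ≠ 0 := fun k hk =>
      (sub_pos.2 (one_lt_pow₀ hp1 hk)).ne'
    have h2 := hk 2 (by norm_num)
    have h3 := hk 3 (by norm_num)
    have h6 := hk 6 (by norm_num)
    have e : ∀ k : ℕ, (1 - 1 / (p : ℝ) ^ k)⁻¹ = (p : ℝ) ^ k / ((p : ℝ) ^ k - 1) := fun k => by
      rw [one_sub_div (pow_ne_zero _ h0), inv_div]
    rw [e, e, e]
    field_simp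
    ring
  · intro e he
    rw [Finset.mem_range, not_lt] at he
    rw [totWeight_prime_pow hp he, zero_div]

/-! ### Second moment of the tail -/

/-- Dividing by `l` reduces this to `∑_{m ≥ B / l} 1 / m² ≤ 2 / ⌈B / l⌉`. -/
lemma sum_inv_sq_le {S : Finset ℕ} {l : ℕ} {B : ℝ} (hB : 0 < B)
    (hS : ∀ n ∈ S, 0 < n ∧ B ≤ n ∧ l ∣ n) :
    ∑ n ∈ S, ((n : ℝ) ^ 2)⁻¹ ≤ 2 / (B * l) := by
  rcases S.eq_empty_or_nonempty with rfl | ⟨n₀, hn₀⟩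
  · rw [Finset.sum_empty]; positivity
  have hl : 0 < l := Nat.pos_of_dvd_of_pos (hS n₀ hn₀).2.2 (hS n₀ hn₀).1
  have hl' : (0 : ℝ) < l := by exact_mod_cast hl
  set k := ⌈B / l⌉₊ - 1 with hk
  have hceil : 0 < ⌈B / l⌉₊ := Nat.ceil_pos.2 (by positivity)
  have hkk : B / l ≤ (k : ℝ) + 1 := by
    have : k + 1 = ⌈B / l⌉₊ := by omega
    exact_mod_cast this ▸ Nat.le_ceil (B / l)
  have hinj : Set.InjOn (· / l) (S : Set ℕ) := fun a ha b hb hab => by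
    rw [← Nat.div_mul_cancel (hS a ha).2.2, ← Nat.div_mul_cancel (hS b hb).2.2]
    exact congrArg (· * l) hab
  have h1 : ∑ n ∈ S, ((n : ℝ) ^ 2)⁻¹ =
      ((l : ℝ) ^ 2)⁻¹ * ∑ m ∈ S.image (· / l), ((m : ℝ) ^ 2)⁻¹ := by
    rw [Finset.sum_image hinj, Finset.mul_sum]
    refine Finset.sum_congr rfl fun n hn => ?_
    obtain ⟨m, rfl⟩ := (hS n hn).2.2
    rw [Nat.mul_div_cancel_left _ hl]
    push_cast
    rw [mul_pow, mul_inv]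
  have h2 : ∑ m ∈ S.image (· / l), ((m : ℝ) ^ 2)⁻¹ ≤ 2 / ((k : ℝ) + 1) := by
    refine le_trans ?_ (sum_Ioo_inv_sq_le k ((S.image (· / l)).sup id + 1))
    refine Finset.sum_le_sum_of_subset_of_nonneg (fun m hm => ?_) fun _ _ _ => by positivity
    have hle : m ≤ (S.image (· / l)).sup id := Finset.le_sup (f := id) hm
    obtain ⟨n, hn, rfl⟩ := Finset.mem_image.1 hm
    obtain ⟨h0, hBn, m, rfl⟩ := hS n hn
    rw [Finset.mem_Ioo]
    refine ⟨?_, Nat.lt_succ_of_le hle⟩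
    simp only [Nat.mul_div_cancel_left _ hl]
    have : ⌈B / l⌉₊ ≤ m := Nat.ceil_le.2 (by
      rw [div_le_iff₀ hl']
      push_cast at hBn
      linarith)
    omega
  rw [h1]
  calc _ ≤ ((l : ℝ) ^ 2)⁻¹ * (2 / (B / l)) := by gcongr; exact h2.trans (by gcongr)
    _ = _ := by field_simp

/-- Equivalently `d e ≤ lcm(d, e)²`, because `gcd(d, e) ≤ lcm(d, e)`. -/
lemma inv_lcm_le {d e : ℕ} (hd : 0 < d) (he : 0 < e) :
    ((Nat.lcm d e : ℕ) : ℝ)⁻¹ ≤ (√(d : ℝ))⁻¹ * (√(e : ℝ))⁻¹ := by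
  have hl : 0 < Nat.lcm d e := Nat.lcm_pos hd he
  rw [← mul_inv, ← Real.sqrt_mul (by positivity)]
  have hd' : (0 : ℝ) < d := by exact_mod_cast hd
  have he' : (0 : ℝ) < e := by exact_mod_cast he
  refine inv_anti₀ (Real.sqrt_pos.2 (by positivity)) ?_
  rw [Real.sqrt_le_left (by positivity)]
  have h : d * e ≤ Nat.lcm d e ^ 2 := by
    rw [← Nat.gcd_mul_lcm d e, sq]
    exact Nat.mul_le_mul_right _ (Nat.le_of_dvd hl ((Nat.gcd_dvd_left d e).trans
      (Nat.dvd_lcm_left d e)))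
  exact_mod_cast h

/-- Second moment estimate for the tail `∑_{d ∣ n, d ∈ T} totWeight d` over `n ≥ B`, with respect
to the weights `1 / n²`. Expanding the square gives a sum over pairs `(d, e)` of multiples of
`lcm(d, e)`, and `1 / lcm(d, e) ≤ 1 / (√d √e)` decouples `d` from `e`. -/
lemma sum_tail_sq_le {S : Finset ℕ} {T : Finset ℕ} {B δ : ℝ} (hB : 0 < B)
    (hT : ∀ d ∈ T, 0 < d) (hδ : ∑ d ∈ T, totWeight d / √(d : ℝ) ≤ δ)
    (hS : ∀ n ∈ S, 0 < n ∧ B ≤ n) :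
    ∑ n ∈ S, (∑ d ∈ T, if d ∣ n then totWeight d else 0) ^ 2 * ((n : ℝ) ^ 2)⁻¹ ≤
      2 / B * δ ^ 2 := by
  have h1 : ∑ n ∈ S, (∑ d ∈ T, if d ∣ n then totWeight d else 0) ^ 2 * ((n : ℝ) ^ 2)⁻¹ =
      ∑ d ∈ T, ∑ e ∈ T, totWeight d * totWeight e *
        ∑ n ∈ S.filter (fun n => Nat.lcm d e ∣ n), ((n : ℝ) ^ 2)⁻¹ := by
    simp_rw [sq (∑ d ∈ T, _), Finset.sum_mul_sum, Finset.sum_mul, Finset.sum_filter,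
      Finset.mul_sum]
    rw [Finset.sum_comm]
    refine Finset.sum_congr rfl fun d _ => ?_
    rw [Finset.sum_comm]
    refine Finset.sum_congr rfl fun e _ => Finset.sum_congr rfl fun n _ => ?_
    by_cases h1 : d ∣ n <;> by_cases h2 : e ∣ n <;> simp [h1, h2, Nat.lcm_dvd_iff]
  have h0 : 0 ≤ ∑ d ∈ T, totWeight d / √(d : ℝ) :=
    Finset.sum_nonneg fun d _ => div_nonneg (totWeight_nonneg d) (Real.sqrt_nonneg _)
  calc _ = _ := h1
    _ ≤ ∑ d ∈ T, ∑ e ∈ T, 2 / B * ((totWeight d / √(d : ℝ)) * (totWeight e / √(e : ℝ))) := by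
      refine Finset.sum_le_sum fun d hd => Finset.sum_le_sum fun e he => ?_
      have hn := mul_nonneg (totWeight_nonneg d) (totWeight_nonneg e)
      calc _ ≤ totWeight d * totWeight e * (2 / (B * (Nat.lcm d e : ℕ))) := by
            refine mul_le_mul_of_nonneg_left (sum_inv_sq_le hB fun n hn => ?_) hn
            rw [Finset.mem_filter] at hn
            exact ⟨(hS n hn.1).1, (hS n hn.1).2, hn.2⟩
        _ = 2 / B * (totWeight d * totWeight e * ((Nat.lcm d e : ℕ) : ℝ)⁻¹) := by
            rw [← div_div]; ring
        _ ≤ 2 / B * (totWeight d * totWeight e * ((√(d : ℝ))⁻¹ * (√(e : ℝ))⁻¹)) := by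
            gcongr
            exact inv_lcm_le (hT d hd) (hT e he)
        _ = _ := by ring
    _ = 2 / B * (∑ d ∈ T, totWeight d / √(d : ℝ)) ^ 2 := by
      rw [sq, Finset.sum_mul_sum, Finset.mul_sum]
      simp_rw [Finset.mul_sum]
    _ ≤ _ := by gcongr

/-! ### Comparison of `PsiSet` with its truncations -/

/-- The upper limit `D` is shared by all `n ≤ D`, so that the tails of finitely many `n` are sums
over a common index set. -/
lemma truncRatio_add_tail {y n D : ℕ} (hn : 0 < n) (hnD : n ≤ D) :
    totRatio n = truncRatio y n +
      ∑ d ∈ Finset.Ioc y (max y D), if d ∣ n then totWeight d else 0 := by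
  have hu : Finset.Icc 1 y ∪ Finset.Ioc y (max y D) = Finset.Icc 1 (max y D) := by
    ext d; simp only [Finset.mem_union, Finset.mem_Icc, Finset.mem_Ioc]; omega
  have hdis : Disjoint (Finset.Icc 1 y) (Finset.Ioc y (max y D)) := by
    rw [Finset.disjoint_left]; intro d; simp only [Finset.mem_Icc, Finset.mem_Ioc]; omega
  rw [totRatio_eq_sum n, truncRatio, ← Finset.sum_union hdis, hu, ← Finset.sum_filter]
  refine Finset.sum_congr ?_ fun _ _ => rfl
  ext d
  simp only [Nat.mem_divisors, Finset.mem_filter, Finset.mem_Icc]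
  constructor
  · rintro ⟨h, -⟩
    have := Nat.le_of_dvd hn h
    have := Nat.pos_of_dvd_of_pos h hn
    exact ⟨by omega, h⟩
  · rintro ⟨-, h⟩
    exact ⟨h, hn.ne'⟩

lemma truncRatio_le_totRatio {n : ℕ} (y : ℕ) (hn : 0 < n) : truncRatio y n ≤ totRatio n := by
  rw [truncRatio_add_tail (y := y) hn le_rfl]
  exact le_add_of_nonneg_right
    (Finset.sum_nonneg fun d _ => by split_ifs <;> simp [totWeight_nonneg])

lemma one_le_truncRatio {y : ℕ} (hy : 1 ≤ y) (n : ℕ) : 1 ≤ truncRatio y n := by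
  have := Finset.single_le_sum (f := fun d => if d ∣ n then totWeight d else 0)
    (s := Finset.Icc 1 y) (fun d _ => by split_ifs <;> simp [totWeight_nonneg])
    (Finset.mem_Icc.2 ⟨le_rfl, hy⟩)
  rw [if_pos (one_dvd n), totWeight_one] at this
  exact this

lemma mem_PsiSet_iff {B : ℝ} {n : ℕ} : n ∈ PsiSet B ↔ 0 < n ∧ (n : ℝ) ≤ B * totRatio n := by
  refine and_congr_right fun hn => ?_
  have hφ : (0 : ℝ) < Nat.totient n := by exact_mod_cast Nat.totient_pos.2 hn
  have hn' : (0 : ℝ) < n := by exact_mod_cast hn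
  rw [totRatio, mul_div_assoc', le_div_iff₀ hφ, mul_comm, mul_le_mul_iff_left₀ hn']

lemma PsiSet_finite (B : ℝ) : (PsiSet B).Finite := by
  obtain ⟨C, hC, h⟩ := totRatio_le
  refine (Set.finite_Iic ⌊(|B| * C) ^ (4 / 3 : ℝ)⌋₊).subset fun n hn => ?_
  rw [mem_PsiSet_iff] at hn
  have hn' : (0 : ℝ) < n := by exact_mod_cast hn.1
  have h0 : 0 ≤ totRatio n := by unfold totRatio; positivity
  have h1 : (n : ℝ) ≤ |B| * C * (n : ℝ) ^ (1 / 4 : ℝ) := by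
    calc (n : ℝ) ≤ B * totRatio n := hn.2
      _ ≤ |B| * totRatio n := by gcongr; exact le_abs_self B
      _ ≤ |B| * (C * (n : ℝ) ^ (1 / 4 : ℝ)) := by gcongr; exact h n
      _ = _ := by ring
  have h2 : (n : ℝ) ^ (3 / 4 : ℝ) ≤ |B| * C := by
    have : (n : ℝ) = (n : ℝ) ^ (3 / 4 : ℝ) * (n : ℝ) ^ (1 / 4 : ℝ) := by
      rw [← Real.rpow_add hn']; norm_num
    have h3 : (n : ℝ) ^ (3 / 4 : ℝ) * (n : ℝ) ^ (1 / 4 : ℝ) ≤ |B| * C * (n : ℝ) ^ (1 / 4 : ℝ) := by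
      rw [← this]; exact h1
    exact le_of_mul_le_mul_right h3 (Real.rpow_pos_of_pos hn' _)
  refine Nat.le_floor ?_
  calc (n : ℝ) = ((n : ℝ) ^ (3 / 4 : ℝ)) ^ (4 / 3 : ℝ) := by
        rw [← Real.rpow_mul hn'.le]; norm_num
    _ ≤ _ := by gcongr

lemma truncSet_subset_PsiSet (y : ℕ) {B : ℝ} (hB : 0 ≤ B) : truncSet y B ⊆ PsiSet B := fun _ hn =>
  mem_PsiSet_iff.2
    ⟨hn.1, hn.2.trans (mul_le_mul_of_nonneg_left (truncRatio_le_totRatio y hn.1) hB)⟩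

/-- An element `n` of `PsiSet B` outside `truncSet y ((1 + ε) * B)` satisfies `n ≥ B`, and its tail
`totRatio n - truncRatio y n` is at least `ε / (1 + ε) * n / B`. Chebyshev's inequality with the
second moment of the tail bounds the number of such `n`. -/
lemma PsiSet_ncard_le {y : ℕ} (hy : 1 ≤ y) {B ε δ : ℝ} (hB : 0 < B) (hε : 0 < ε)
    (hδ : ∀ D, ∑ d ∈ Finset.Ioc y D, totWeight d / √(d : ℝ) ≤ δ) :
    ((PsiSet B).ncard : ℝ) ≤
      (truncSet y ((1 + ε) * B)).ncard + 2 * ((1 + ε) / ε) ^ 2 * δ ^ 2 * B := by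
  have hfin : (PsiSet B \ truncSet y ((1 + ε) * B)).Finite :=
    (PsiSet_finite B).subset Set.sdiff_subset
  have h1 : (PsiSet B).ncard ≤
      (PsiSet B \ truncSet y ((1 + ε) * B)).ncard + (truncSet y ((1 + ε) * B)).ncard :=
    Set.ncard_le_ncard_sdiff_add_ncard _ _ (truncSet_finite y (by positivity))
  set S := hfin.toFinset with hSdef
  set D := S.sup id
  set T := Finset.Ioc y (max y D)
  have hmem : ∀ n ∈ S, 0 < n ∧ (n : ℝ) ≤ B * totRatio n ∧ (1 + ε) * B * truncRatio y n < n := by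
    intro n hn
    rw [hSdef, Set.Finite.mem_toFinset] at hn
    have h := mem_PsiSet_iff.1 hn.1
    exact ⟨h.1, h.2, not_le.1 fun h' => hn.2 ⟨h.1, h'⟩⟩
  have hS : ∀ n ∈ S, 0 < n ∧ B ≤ n := by
    intro n hn
    obtain ⟨h0, -, h2⟩ := hmem n hn
    refine ⟨h0, ?_⟩
    have := one_le_truncRatio hy n
    nlinarith [mul_pos hε hB]
  have h2 := sum_tail_sq_le (S := S) (T := T) hB
    (fun d hd => by have := (Finset.mem_Ioc.1 hd).1; omega) (hδ _) hS
  have h3 : (S.card : ℝ) ≤ ∑ n ∈ S, ((1 + ε) / ε * B) ^ 2 *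
      ((∑ d ∈ T, if d ∣ n then totWeight d else 0) ^ 2 * ((n : ℝ) ^ 2)⁻¹) := by
    rw [Finset.card_eq_sum_ones, Nat.cast_sum]
    refine Finset.sum_le_sum fun n hn => ?_
    obtain ⟨h0, ha, hb⟩ := hmem n hn
    have hn' : (0 : ℝ) < n := by exact_mod_cast h0
    rw [truncRatio_add_tail (y := y) h0 (Finset.le_sup (f := id) hn)] at ha
    set r := ∑ d ∈ T, if d ∣ n then totWeight d else 0
    -- Adding `ha : n ≤ B (f_y + r)` and `hb : (1 + ε) B f_y < n` with weights `1 + ε` and `1`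
    -- eliminates `f_y = truncRatio y n`.
    have hr : (n : ℝ) ≤ (1 + ε) / ε * B * r := by
      rw [div_mul_eq_mul_div, div_mul_eq_mul_div, le_div_iff₀ hε]
      nlinarith
    rw [← mul_assoc, ← mul_pow, ← div_eq_mul_inv, le_div_iff₀ (by positivity)]
    push_cast
    rw [one_mul]
    gcongr
  have h4 : ((PsiSet B \ truncSet y ((1 + ε) * B)).ncard : ℝ) = S.card := by
    rw [Set.ncard_eq_toFinset_card _ hfin]
  have h5 : (S.card : ℝ) ≤ 2 * ((1 + ε) / ε) ^ 2 * δ ^ 2 * B := by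
    rw [← Finset.mul_sum] at h3
    calc _ ≤ _ := h3
      _ ≤ ((1 + ε) / ε * B) ^ 2 * (2 / B * δ ^ 2) := by gcongr
      _ = _ := by field_simp
  have h6 : ((PsiSet B).ncard : ℝ) ≤ (PsiSet B \ truncSet y ((1 + ε) * B)).ncard +
    (truncSet y ((1 + ε) * B)).ncard := by exact_mod_cast h1
  linarith

/-- The tails of the convergent series `∑ totWeight d / √d`, uniformly in the upper limit. -/
lemma exists_tail_le {δ : ℝ} (hδ : 0 < δ) :
    ∃ y₀, ∀ y ≥ y₀, ∀ D, ∑ d ∈ Finset.Ioc y D, totWeight d / √(d : ℝ) ≤ δ := by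
  obtain ⟨s, hs⟩ := summable_iff_vanishing_norm.1 summable_totWeight_div_sqrt δ hδ
  refine ⟨s.sup id, fun y hy D => (le_abs_self _).trans (hs _ ?_).le⟩
  rw [Finset.disjoint_left]
  intro d hd hds
  have : d ≤ s.sup id := Finset.le_sup (f := id) hds
  have := (Finset.mem_Ioc.1 hd).1
  omega

/-! ### The limit -/

lemma tendsto_truncMean :
    Tendsto (fun y : ℕ => ∑ d ∈ Finset.Icc 1 y, totWeight d / (d : ℝ)) atTop
      (nhds (∑' d : ℕ, totWeight d / (d : ℝ))) := by
  refine ((tendsto_add_atTop_iff_nat 1).2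
    summable_totWeight_div.hasSum.tendsto_sum_nat).congr fun y => ?_
  rw [Finset.sum_range_succ', Nat.cast_zero, div_zero, add_zero,
    Finset.range_eq_Ico, Finset.sum_Ico_add' (fun d : ℕ => totWeight d / (d : ℝ)), zero_add]
  rfl

/-- The number of positive integers `b` with `φ(b) ≤ B` is asymptotically
`(ζ(2)ζ(3)/ζ(6))·B`. -/
theorem card_PsiSet_asymptotic :
    Tendsto (fun B : ℝ => ((PsiSet B).ncard : ℝ) / B) atTop
      (nhds (zetaR 2 * zetaR 3 / zetaR 6)) := by
  rw [← tsum_totWeight_div]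
  set M := ∑' d : ℕ, totWeight d / (d : ℝ) with hM
  have hM0 : 0 ≤ M := tsum_nonneg fun d => div_nonneg (totWeight_nonneg d) (by positivity)
  refine tendsto_order.2 ⟨fun a ha => ?_, fun b hb => ?_⟩
  -- Lower bound: a truncation whose mean exceeds `a` already gives enough elements.
  · obtain ⟨y, hy⟩ := (tendsto_truncMean.eventually_const_lt ha).exists
    filter_upwards [(truncSet_tendsto y).eventually_const_lt hy, eventually_gt_atTop 0] with B h1 hB
    refine h1.trans_le ?_
    gcongr
    exacts [PsiSet_finite B, truncSet_subset_PsiSet y hB.le]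
  -- Upper bound: `ε` and `δ` are fixed first, and `y` depends on `δ`.
  · obtain ⟨ε, hε, hεb⟩ : ∃ ε : ℝ, 0 < ε ∧ (1 + ε) * M < b := by
      refine ⟨(b - M) / (2 * (M + 1)), div_pos (by linarith) (by linarith), ?_⟩
      have : (b - M) / (2 * (M + 1)) * M ≤ (b - M) / 2 := by
        rw [div_mul_eq_mul_div, div_le_div_iff₀ (by linarith) (by norm_num)]
        nlinarith
      linarith
    obtain ⟨δ, hδ, hδb⟩ : ∃ δ : ℝ, 0 < δ ∧
        (1 + ε) * M + 2 * ((1 + ε) / ε) ^ 2 * δ ^ 2 < b := by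
      have hc : Tendsto (fun δ : ℝ => (1 + ε) * M + 2 * ((1 + ε) / ε) ^ 2 * δ ^ 2)
          (nhdsWithin 0 (Set.Ioi 0)) (nhds ((1 + ε) * M + 2 * ((1 + ε) / ε) ^ 2 * 0 ^ 2)) :=
        (Continuous.tendsto (by fun_prop) 0).mono_left nhdsWithin_le_nhds
      obtain ⟨δ, h1, h2⟩ := ((hc.eventually_lt_const (u := b) (by simpa using hεb)).and
        self_mem_nhdsWithin).exists
      exact ⟨δ, h2, h1⟩
    obtain ⟨y₀, hy₀⟩ := exists_tail_le hδ
    set y := max y₀ 1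
    have hMy : ∑ d ∈ Finset.Icc 1 y, totWeight d / (d : ℝ) ≤ M :=
      summable_totWeight_div.sum_le_tsum _ fun d _ => div_nonneg (totWeight_nonneg d) (by positivity)
    have hlim : Tendsto (fun B : ℝ => (1 + ε) * (((truncSet y ((1 + ε) * B)).ncard : ℝ) /
        ((1 + ε) * B)) + 2 * ((1 + ε) / ε) ^ 2 * δ ^ 2) atTop (nhds ((1 + ε) *
          ∑ d ∈ Finset.Icc 1 y, totWeight d / (d : ℝ) + 2 * ((1 + ε) / ε) ^ 2 * δ ^ 2)) :=
      (((truncSet_tendsto y).comp (tendsto_id.const_mul_atTop (by positivity))).const_mul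
        _).add_const _
    have hlt : (1 + ε) * ∑ d ∈ Finset.Icc 1 y, totWeight d / (d : ℝ) +
        2 * ((1 + ε) / ε) ^ 2 * δ ^ 2 < b := by
      refine lt_of_le_of_lt ?_ hδb
      gcongr
    filter_upwards [hlim.eventually_lt_const hlt, eventually_gt_atTop 0] with B h1 hB
    refine lt_of_le_of_lt ?_ h1
    rw [div_le_iff₀ hB]
    refine (PsiSet_ncard_le (y := y) (le_max_right y₀ 1) hB hε
      (hy₀ y (le_max_left _ _))).trans_eq ?_
    have : (1 : ℝ) + ε ≠ 0 := by positivity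
    generalize ((truncSet y ((1 + ε) * B)).ncard : ℝ) = N
    field_simp
end

section
/- The cardinality of the zero set satisfies |𝓕_B| = (½·ζ(2)ζ(3)/ζ(6) + o(1))·B² as B → ∞; equivalently, lim_{B→∞} (∑_{b: φ(b) ≤ B} φ(b)) / B² = ζ(2)ζ(3)/(2ζ(6)). -/
/-!
Write `n / φ(n) = ∏_{p ∣ n} p / (p - 1)` and truncate the product to a finite set `P` of primes,
giving `f_P(n) = localProd phiWeight P n`.

* `f_P` is periodic modulo `∏_{p ∈ P} p` with mean `eulerFin P = ∏_{p ∈ P} (1 + 1 / (p (p - 1)))`,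
  so `#{n ≥ 1 : n ≤ x f_P(n)} = x * eulerFin P + O_P(1)` (`localProd_count`).
* The products `eulerFin P` increase to `c = ζ(2) ζ(3) / ζ(6)` (`tendsto_eulerFin`): compare Euler
  factors.
* Since `f_P(n) ≤ n / φ(n)`, the condition `n ≤ B f_P(n)` implies `φ(n) ≤ B`, which gives the lower
  bound `#Ψ_B ≥ (c - o(1)) B`.
* Conversely, if `φ(n) ≤ B` then either `n ≤ (1 + ε) B f_P(n)`, or `n ≤ T B` and
  `n / φ(n) > (1 + ε) f_P(n)`, or `n > T B`. The second set has at most `(T B / ε) (c / eulerFin P - 1)`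
  elements by a first moment bound (`card_bad_le`), and the third at most `O(B / T)` by the second
  moment bound `∑_{n > X} φ(n)⁻² = O(1 / X)` (`exists_card_tail_le`). Choosing `ε`, then `T`, then `P`
  yields `#Ψ_B ∼ c B` (`tendsto_ncard_PsiSet`).
* Summation by parts turns `#Ψ_m ∼ c m` into `∑_{n ∈ Ψ_m} φ(n) ∼ c m² - c m² / 2`.

All moments come from one expansion, `sum_mul_localProd`: opening the product over `P` leaves only
sums over multiples of the divisors `∏_{p ∈ S} p` with `S ⊆ P`, and these recombine into an Euler
product.
-/

open Filter Real

/-! ### Truncated products over primes and their moments -/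

/-- The local product `∏_{p ∈ P, p ∣ n} (1 + a p)`. -/
noncomputable def localProd (a : ℕ → ℝ) (P : Finset ℕ) (n : ℕ) : ℝ :=
  ∏ p ∈ P with p ∣ n, (1 + a p)

/-- The weight for which `localProd` produces `n / φ(n)`: `1 + phiWeight p = p / (p - 1)`. -/
noncomputable def phiWeight (p : ℕ) : ℝ := 1 / ((p : ℝ) - 1)

lemma one_add_phiWeight {p : ℕ} (hp : p.Prime) :
    1 + phiWeight p = (1 - (p : ℝ)⁻¹)⁻¹ := by
  have h1 : (1 : ℝ) < p := by exact_mod_cast hp.one_lt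
  have h2 : (p : ℝ) - 1 ≠ 0 := by linarith
  have h3 : (p : ℝ) ≠ 0 := by linarith
  have h4 : 1 - (p : ℝ)⁻¹ = ((p : ℝ) - 1) / p := by field_simp
  rw [phiWeight, h4, inv_div]
  field_simp
  ring

lemma phiWeight_pos {p : ℕ} (hp : p.Prime) : 0 < phiWeight p := by
  have h1 : (1 : ℝ) < p := by exact_mod_cast hp.one_lt
  exact div_pos one_pos (by linarith)

lemma localProd_expand (a : ℕ → ℝ) {P : Finset ℕ} (hP : ∀ p ∈ P, p.Prime) (n : ℕ) :
    localProd a P n = ∑ S ∈ P.powerset, if (∏ p ∈ S, p) ∣ n then ∏ p ∈ S, a p else 0 := by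
  rw [localProd, Finset.prod_one_add, ← Finset.sum_filter]
  refine Finset.sum_congr ?_ fun _ _ => rfl
  ext S
  simp only [Finset.mem_powerset, Finset.mem_filter]
  constructor
  · intro h
    refine ⟨fun p hp => (Finset.mem_filter.1 (h hp)).1, ?_⟩
    exact Finset.prod_primes_dvd n (fun p hp => (hP p (Finset.mem_filter.1 (h hp)).1).prime)
      fun p hp => (Finset.mem_filter.1 (h hp)).2
  · rintro ⟨h1, h2⟩ p hp
    exact Finset.mem_filter.2 ⟨h1 hp, (Finset.dvd_prod_of_mem _ hp).trans h2⟩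

/-- Averaging `localProd` against a weight `u` only involves the `u`-mass of the multiples of
squarefree `d`. -/
lemma sum_mul_localProd (a u : ℕ → ℝ) {P : Finset ℕ} (hP : ∀ p ∈ P, p.Prime) (A : Finset ℕ) :
    ∑ n ∈ A, u n * localProd a P n =
      ∑ S ∈ P.powerset, (∏ p ∈ S, a p) * ∑ n ∈ A with (∏ p ∈ S, p) ∣ n, u n := by
  simp_rw [localProd_expand a hP, Finset.mul_sum, Finset.sum_filter]
  rw [Finset.sum_comm]
  refine Finset.sum_congr rfl fun S _ => Finset.sum_congr rfl fun n _ => ?_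
  split_ifs <;> ring

lemma sum_powerset_prod_div (a : ℕ → ℝ) (P : Finset ℕ) (K : ℝ) :
    ∑ S ∈ P.powerset, (∏ p ∈ S, a p) * (K / ((∏ p ∈ S, p : ℕ) : ℝ)) =
      K * ∏ p ∈ P, (1 + a p / p) := by
  rw [Finset.prod_one_add, Finset.mul_sum]
  refine Finset.sum_congr rfl fun S _ => ?_
  rw [Finset.prod_div_distrib]
  push_cast
  ring

/-- If the multiples of `d` carry at most the share `K / d` of the mass of `u`, the mean of
`localProd` is at most the corresponding finite Euler product. -/
lemma sum_mul_localProd_le {a : ℕ → ℝ} (u : ℕ → ℝ) {P : Finset ℕ} (hP : ∀ p ∈ P, p.Prime)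
    (ha : ∀ p ∈ P, 0 ≤ a p) (A : Finset ℕ) (K : ℝ)
    (hu : ∀ d : ℕ, 0 < d → ∑ n ∈ A with d ∣ n, u n ≤ K / d) :
    ∑ n ∈ A, u n * localProd a P n ≤ K * ∏ p ∈ P, (1 + a p / p) := by
  rw [sum_mul_localProd a u hP, ← sum_powerset_prod_div]
  refine Finset.sum_le_sum fun S hS => ?_
  have hS := Finset.mem_powerset.1 hS
  refine mul_le_mul_of_nonneg_left (hu _ ?_) (Finset.prod_nonneg fun p hp => ha p (hS hp))
  exact Finset.prod_pos fun p hp => (hP p (hS hp)).pos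

/-- `n = φ(n) · ∏_{p ∣ n} p / (p - 1)`. -/
lemma eq_totient_mul_localProd {P : Finset ℕ} (hP : ∀ p ∈ P, p.Prime) {n : ℕ} (hn : 0 < n)
    (hPn : ∀ p, p.Prime → p ∣ n → p ∈ P) :
    (n : ℝ) = n.totient * localProd phiWeight P n := by
  have h1 : P.filter (· ∣ n) = n.primeFactors := by
    ext p
    simp only [Finset.mem_filter, Nat.mem_primeFactors]
    exact ⟨fun h => ⟨hP p h.1, h.2, hn.ne'⟩, fun h => ⟨hPn p h.1 h.2.1, h.2.1⟩⟩
  have h2 : (n.totient : ℝ) = n * ∏ p ∈ n.primeFactors, (1 - (p : ℝ)⁻¹) := by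
    have := congrArg (Rat.cast : ℚ → ℝ) (Nat.totient_eq_mul_prod_factors n)
    push_cast at this
    exact this
  rw [localProd, h1, h2, mul_assoc, ← Finset.prod_mul_distrib]
  rw [Finset.prod_eq_one, mul_one]
  intro p hp
  have hp := Nat.prime_of_mem_primeFactors hp
  have h3 : (1 : ℝ) < p := by exact_mod_cast hp.one_lt
  rw [one_add_phiWeight hp, mul_inv_cancel₀]
  have : (p : ℝ)⁻¹ < 1 := inv_lt_one_of_one_lt₀ h3
  linarith

lemma one_le_localProd {P : Finset ℕ} (hP : ∀ p ∈ P, p.Prime) (n : ℕ) :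
    1 ≤ localProd phiWeight P n := by
  refine Finset.one_le_prod fun p hp => ?_
  have := phiWeight_pos (hP p (Finset.mem_filter.1 hp).1)
  linarith

/-- The square of `p / (p - 1)` is at most `1 + 6 / p`, with equality at `p = 2`. -/
lemma localProd_sq_le {P : Finset ℕ} (hP : ∀ p ∈ P, p.Prime) (n : ℕ) :
    localProd phiWeight P n ^ 2 ≤ localProd (fun p => 6 / (p : ℝ)) P n := by
  rw [localProd, localProd, ← Finset.prod_pow]
  refine Finset.prod_le_prod (fun p _ => by positivity) fun p hp => ?_
  have hp := hP p (Finset.mem_filter.1 hp).1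
  have h2 : (2 : ℝ) ≤ p := by exact_mod_cast hp.two_le
  have h3 : (0 : ℝ) < p - 1 := by linarith
  have h4 : (0 : ℝ) < p := by linarith
  have h5 : 1 + phiWeight p = p / (p - 1) := by rw [phiWeight]; field_simp; ring
  have h6 : 1 + 6 / (p : ℝ) = (p + 6) / p := by field_simp
  simp only [h5, h6, div_pow]
  rw [div_le_div_iff₀ (by positivity) h4]
  nlinarith [mul_nonneg (sub_nonneg.2 h2) h4.le]

lemma sum_Ioc_dvd_inv_sq_le {X : ℕ} (hX : 0 < X) (Y d : ℕ) (hd : 0 < d) :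
    ∑ n ∈ Finset.Ioc X Y with d ∣ n, ((n : ℝ) ^ 2)⁻¹ ≤ 2 / X / d := by
  have h1 : ∑ n ∈ Finset.Ioc X Y with d ∣ n, ((n : ℝ) ^ 2)⁻¹ ≤
      ∑ k ∈ Finset.Ioo (X / d) (Y + 1), (((d : ℝ) * k) ^ 2)⁻¹ := by
    have : (Finset.Ioc X Y).filter (d ∣ ·) ⊆
        (Finset.Ioo (X / d) (Y + 1)).image (fun k => d * k) := by
      intro n hn
      obtain ⟨hn, k, rfl⟩ := Finset.mem_filter.1 hn
      obtain ⟨h1, h2⟩ := Finset.mem_Ioc.1 hn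
      refine Finset.mem_image.2 ⟨k, Finset.mem_Ioo.2 ⟨?_, ?_⟩, rfl⟩
      · rw [Nat.div_lt_iff_lt_mul hd]; linarith [mul_comm d k]
      · have := Nat.le_mul_of_pos_left k hd
        omega
    refine (Finset.sum_le_sum_of_subset_of_nonneg this fun _ _ _ => by positivity).trans ?_
    rw [Finset.sum_image fun x _ y _ h => Nat.eq_of_mul_eq_mul_left hd h]
    push_cast
    exact le_rfl
  refine h1.trans ?_
  simp_rw [mul_pow, mul_inv]
  rw [← Finset.mul_sum]
  have hd' : (0 : ℝ) < d := by exact_mod_cast hd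
  have hX' : (0 : ℝ) < X := by exact_mod_cast hX
  have h2 : (X : ℝ) ≤ d * ((X / d : ℕ) + 1) := by
    have := Nat.lt_mul_div_succ X hd
    exact_mod_cast this.le
  calc ((d : ℝ) ^ 2)⁻¹ * ∑ k ∈ Finset.Ioo (X / d) (Y + 1), ((k : ℝ) ^ 2)⁻¹
      ≤ ((d : ℝ) ^ 2)⁻¹ * (2 / ((X / d : ℕ) + 1)) := by
        gcongr
        exact sum_Ioo_inv_sq_le _ _
    _ = 2 / (d * ((X / d : ℕ) + 1)) / d := by field_simp
    _ ≤ 2 / X / d := by gcongr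

/-- Uniform bound for the Euler products occurring in the second moment. -/
lemma exists_prod_bound : ∃ C : ℝ, 0 < C ∧
    ∀ P : Finset ℕ, ∏ p ∈ P, (1 + (6 / (p : ℝ)) / p) ≤ C := by
  have hs : Summable fun n : ℕ => (6 / (n : ℝ)) / n := by
    have := (Real.summable_one_div_nat_pow (p := 2)).2 (by norm_num)
    refine (this.mul_left 6).congr fun n => ?_
    rw [div_div, ← sq]; ring
  refine ⟨exp (∑' n : ℕ, (6 / (n : ℝ)) / n), exp_pos _, fun P => ?_⟩
  calc ∏ p ∈ P, (1 + (6 / (p : ℝ)) / p) ≤ ∏ p ∈ P, exp ((6 / (p : ℝ)) / p) :=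
        Finset.prod_le_prod (fun _ _ => by positivity) fun p _ => by
          linarith [add_one_le_exp ((6 / (p : ℝ)) / p)]
    _ = exp (∑ p ∈ P, (6 / (p : ℝ)) / p) := (exp_sum _ _).symm
    _ ≤ _ := exp_le_exp.2 (hs.sum_le_tsum _ fun _ _ => by positivity)

/-- Second moment estimate: `∑_{X < n ≤ Y} φ(n)⁻² = O(1 / X)`, uniformly in `Y`. -/
lemma exists_tail_bound : ∃ C : ℝ, 0 < C ∧ ∀ X Y : ℕ, 0 < X →
    ∑ n ∈ Finset.Ioc X Y, ((n.totient : ℝ) ^ 2)⁻¹ ≤ C / X := by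
  obtain ⟨C, hC, h⟩ := exists_prod_bound
  refine ⟨2 * C, by positivity, fun X Y hX => ?_⟩
  have hP : ∀ p ∈ Nat.primesBelow (Y + 1), p.Prime := fun p => Nat.prime_of_mem_primesBelow
  calc ∑ n ∈ Finset.Ioc X Y, ((n.totient : ℝ) ^ 2)⁻¹
      ≤ ∑ n ∈ Finset.Ioc X Y, ((n : ℝ) ^ 2)⁻¹ *
          localProd (fun p => 6 / (p : ℝ)) (Nat.primesBelow (Y + 1)) n := by
        refine Finset.sum_le_sum fun n hn => ?_
        obtain ⟨h1, h2⟩ := Finset.mem_Ioc.1 hn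
        have hn0 : 0 < n := by omega
        refine le_trans (le_of_eq ?_)
          (mul_le_mul_of_nonneg_left (localProd_sq_le hP n) (by positivity))
        have h3 := eq_totient_mul_localProd hP hn0 fun p hp hpn =>
          Nat.mem_primesBelow.2 ⟨by have := Nat.le_of_dvd hn0 hpn; omega, hp⟩
        have h4 : (0 : ℝ) < n.totient := by exact_mod_cast Nat.totient_pos.2 hn0
        have h5 := one_le_localProd hP n
        have h6 : localProd phiWeight (Nat.primesBelow (Y + 1)) n ≠ 0 := by linarith
        generalize localProd phiWeight (Nat.primesBelow (Y + 1)) n = w at h3 h6 ⊢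
        rw [h3]
        field_simp
    _ ≤ 2 / X * ∏ p ∈ Nat.primesBelow (Y + 1), (1 + (6 / (p : ℝ)) / p) :=
        sum_mul_localProd_le _ hP (fun _ _ => by positivity) _ _
          fun d hd => sum_Ioc_dvd_inv_sq_le hX Y d hd
    _ ≤ 2 / X * C := by gcongr; exact h _
    _ = 2 * C / X := by ring

/-! ### The Euler product of `ζ(2) ζ(3) / ζ(6)` -/

/-- The Euler product of `ζ(k)`, in real form. -/
lemma tendsto_zetaR {k : ℕ} (hk : 2 ≤ k) :
    Tendsto (fun s : Finset Nat.Primes => ∏ p ∈ s, (1 - ((p : ℝ) ^ k)⁻¹)⁻¹) atTop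
      (nhds (zetaR k)) := by
  have h := riemannZeta_eulerProduct_hasProd (s := (k : ℂ)) (by
    rw [Complex.natCast_re]; exact_mod_cast hk)
  rw [HasProd, SummationFilter.unconditional_filter] at h
  have h2 := (Complex.continuous_re.tendsto _).comp h
  refine h2.congr fun s => ?_
  have : ∀ p : Nat.Primes, (1 - ((p : ℕ) : ℂ) ^ (-(k : ℂ)))⁻¹ =
      (((1 - ((p : ℝ) ^ k)⁻¹)⁻¹ : ℝ) : ℂ) := fun p => by
    rw [Complex.cpow_neg, Complex.cpow_natCast]
    push_cast
    rfl
  simp only [Function.comp_apply, this]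
  rw [← Complex.ofReal_prod, Complex.ofReal_re]

/-- The finite Euler product `∏_{p ∈ P} (1 + 1 / (p (p - 1)))`. -/
noncomputable def eulerFin (P : Finset ℕ) : ℝ := ∏ p ∈ P, (1 + phiWeight p / p)

/-- The identity `(1 - x⁻⁶) / ((1 - x⁻²) (1 - x⁻³)) = 1 + 1 / (x (x - 1))`. -/
lemma eulerFin_factor_eq {p : ℕ} (hp : p.Prime) :
    (1 - ((p : ℝ) ^ 2)⁻¹)⁻¹ * (1 - ((p : ℝ) ^ 3)⁻¹)⁻¹ / (1 - ((p : ℝ) ^ 6)⁻¹)⁻¹ =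
      1 + phiWeight p / p := by
  have h1 : (1 : ℝ) < p := by exact_mod_cast hp.one_lt
  rw [phiWeight]
  generalize (p : ℝ) = x at h1
  have h0 : x ≠ 0 := by linarith
  have k1 : x - 1 ≠ 0 := by linarith
  have k2 : x ^ 2 - 1 ≠ 0 := (sub_pos.2 (one_lt_pow₀ h1 (by norm_num))).ne'
  have k3 : x ^ 3 - 1 ≠ 0 := (sub_pos.2 (one_lt_pow₀ h1 (by norm_num))).ne'
  have k6 : x ^ 6 - 1 ≠ 0 := (sub_pos.2 (one_lt_pow₀ h1 (by norm_num))).ne'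
  have e : ∀ k : ℕ, 1 - (x ^ k)⁻¹ = (x ^ k - 1) / x ^ k := fun k => by
    field_simp
  rw [e, e, e]
  field_simp
  ring

lemma one_le_factor {p : ℕ} (hp : p.Prime) : 1 ≤ 1 + phiWeight p / p := by
  have := div_nonneg (phiWeight_pos hp).le (Nat.cast_nonneg (α := ℝ) p)
  linarith

lemma one_le_zetaR {k : ℕ} (hk : 2 ≤ k) : 1 ≤ zetaR k := by
  refine ge_of_tendsto' (tendsto_zetaR hk) fun s => Finset.one_le_prod fun p _ => ?_
  have h1 : (1 : ℝ) < p := by exact_mod_cast p.2.one_lt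
  have h2 : ((p : ℝ) ^ k)⁻¹ < 1 := inv_lt_one_of_one_lt₀ (one_lt_pow₀ h1 (by omega))
  have h3 : 0 < ((p : ℝ) ^ k)⁻¹ := by positivity
  exact (one_le_inv₀ (by linarith)).2 (by linarith)

lemma tendsto_eulerFin :
    Tendsto (fun s : Finset Nat.Primes => ∏ p ∈ s, (1 + phiWeight p / (p : ℕ))) atTop
      (nhds (zetaR 2 * zetaR 3 / zetaR 6)) := by
  have h6 : zetaR 6 ≠ 0 := by
    have := one_le_zetaR (k := 6) (by norm_num)
    linarith
  refine (((tendsto_zetaR (k := 2) le_rfl).mul (tendsto_zetaR (k := 3) (by norm_num))).div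
    (tendsto_zetaR (k := 6) (by norm_num)) h6).congr fun s => ?_
  simp only [Pi.div_apply]
  rw [← Finset.prod_mul_distrib, ← Finset.prod_div_distrib]
  exact Finset.prod_congr rfl fun p _ => eulerFin_factor_eq p.2

lemma eulerFin_mono {P Q : Finset ℕ} (h : P ⊆ Q) (hQ : ∀ p ∈ Q, p.Prime) :
    eulerFin P ≤ eulerFin Q :=
  Finset.prod_le_prod_of_subset_of_one_le h
    (fun p hp => zero_le_one.trans (one_le_factor (hQ p (h hp))))
    fun p hp _ => one_le_factor (hQ p hp)

lemma eulerFin_map (s : Finset Nat.Primes) :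
    eulerFin (s.map (Function.Embedding.subtype _)) = ∏ p ∈ s, (1 + phiWeight p / (p : ℕ)) :=
  Finset.prod_map s _ _

lemma prime_of_mem_map {s : Finset Nat.Primes} :
    ∀ p ∈ s.map (Function.Embedding.subtype _), p.Prime := by
  intro p hp
  obtain ⟨q, -, rfl⟩ := Finset.mem_map.1 hp
  exact q.2

lemma eulerFin_le {P : Finset ℕ} (hP : ∀ p ∈ P, p.Prime) :
    eulerFin P ≤ zetaR 2 * zetaR 3 / zetaR 6 := by
  refine ge_of_tendsto tendsto_eulerFin ?_
  filter_upwards [eventually_ge_atTop (P.subtype Nat.Prime)] with s hs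
  rw [← eulerFin_map]
  refine eulerFin_mono (fun p hp => ?_) prime_of_mem_map
  exact Finset.mem_map.2 ⟨⟨p, hP p hp⟩, hs (Finset.mem_subtype.2 hp), rfl⟩

lemma exists_lt_eulerFin {x : ℝ} (hx : x < zetaR 2 * zetaR 3 / zetaR 6) :
    ∃ P : Finset ℕ, (∀ p ∈ P, p.Prime) ∧ x < eulerFin P := by
  obtain ⟨s, hs⟩ := (tendsto_eulerFin.eventually (lt_mem_nhds hx)).exists
  exact ⟨_, prime_of_mem_map, (eulerFin_map s).symm ▸ hs⟩

/-! ### Counting with a periodic weight -/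

/-- If `f` is periodic modulo `M`, the number of `n ≥ 1` with `n ≤ x f(n)` is `x` times the mean
of `f` up to a bounded error: each residue class contributes an initial segment. -/
lemma periodic_count {f : ℕ → ℝ} {M : ℕ} (hM : 0 < M) (hf : ∀ n, f (n % M) = f n)
    (hf0 : ∀ n, 0 ≤ f n) {x : ℝ} (hx : 0 ≤ x) :
    {n : ℕ | 0 < n ∧ (n : ℝ) ≤ x * f n}.Finite ∧
    |({n : ℕ | 0 < n ∧ (n : ℝ) ≤ x * f n}.ncard : ℝ) -
      x * ((∑ r ∈ Finset.range M, f r) / M)| ≤ 2 * M := by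
  set K := ∑ r ∈ Finset.range M, ⌊x * f r⌋₊ with hK
  set A := (Finset.Ioc 0 K).filter (fun n : ℕ => (n : ℝ) ≤ x * f n) with hA
  have hle : ∀ n : ℕ, (n : ℝ) ≤ x * f n ↔ n ≤ ⌊x * f (n % M)⌋₊ := fun n => by
    rw [hf, Nat.le_floor_iff (mul_nonneg hx (hf0 n))]
  have hKr : ∀ r < M, ⌊x * f r⌋₊ ≤ K := fun r hr =>
    Finset.single_le_sum (f := fun r => ⌊x * f r⌋₊) (fun _ _ => Nat.zero_le _)
      (Finset.mem_range.2 hr)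
  have hset : {n : ℕ | 0 < n ∧ (n : ℝ) ≤ x * f n} = A := by
    ext n
    simp only [Set.mem_ofPred_eq, hA, Finset.coe_filter, Finset.mem_Ioc]
    constructor
    · rintro ⟨h1, h2⟩
      exact ⟨⟨h1, ((hle n).1 h2).trans (hKr _ (Nat.mod_lt _ hM))⟩, h2⟩
    · rintro ⟨⟨h1, _⟩, h2⟩
      exact ⟨h1, h2⟩
  rw [hset]
  refine ⟨A.finite_toSet, ?_⟩
  have hcard : A.card = ∑ r ∈ Finset.range M,
      ((Finset.Ioc 0 ⌊x * f r⌋₊).filter (fun n => n ≡ r [MOD M])).card := by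
    rw [Finset.card_eq_sum_card_fiberwise (f := fun n => n % M) (t := Finset.range M)
      fun n _ => Finset.mem_coe.2 (Finset.mem_range.2 (Nat.mod_lt _ hM))]
    refine Finset.sum_congr rfl fun r hr => congrArg Finset.card ?_
    have hr := Finset.mem_range.1 hr
    ext n
    simp only [hA, Finset.mem_filter, Finset.mem_Ioc, hle, Nat.ModEq, Nat.mod_eq_of_lt hr]
    constructor
    · rintro ⟨⟨⟨h1, h2⟩, h3⟩, h4⟩
      exact ⟨⟨h1, h4 ▸ h3⟩, h4⟩
    · rintro ⟨⟨h1, h2⟩, h3⟩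
      exact ⟨⟨⟨h1, h2.trans (hKr r hr)⟩, h3 ▸ h2⟩, h3⟩
  have hMr : (0 : ℝ) < M := by exact_mod_cast hM
  have hclass : ∀ r ∈ Finset.range M,
      |(((Finset.Ioc 0 ⌊x * f r⌋₊).filter (fun n => n ≡ r [MOD M])).card : ℝ) -
        x * f r / M| ≤ 2 := by
    intro r _
    set v := ⌊x * f r⌋₊ with hv
    have h := Nat.Ioc_filter_modEq_card 0 v hM r
    have hv1 := Nat.floor_le (mul_nonneg hx (hf0 r))
    have hv2 := Nat.lt_floor_add_one (x * f r)
    rw [← hv] at hv1 hv2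
    generalize ((Finset.Ioc 0 v).filter (fun n => n ≡ r [MOD M])).card = c at h ⊢
    have hq : |(c : ℚ) - (v : ℚ) / M| ≤ 1 := by
      have hMq : (0 : ℚ) < M := by exact_mod_cast hM
      have h0 : (0 : ℚ) ≤ (v : ℚ) / M := by positivity
      have hc : (c : ℚ) = max ((⌊((v : ℚ) - r) / M⌋ : ℚ) - ⌊(((0 : ℕ) : ℚ) - r) / M⌋) 0 := by
        exact_mod_cast h
      have e : ((v : ℚ) - r) / M - (((0 : ℕ) : ℚ) - r) / M = v / M := by push_cast; ring
      have a1 := Int.floor_le (((v : ℚ) - r) / M)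
      have a2 := Int.lt_floor_add_one (((v : ℚ) - r) / M)
      have a3 := Int.floor_le ((((0 : ℕ) : ℚ) - r) / M)
      have a4 := Int.lt_floor_add_one ((((0 : ℕ) : ℚ) - r) / M)
      rw [hc, abs_le]
      rcases max_cases ((⌊((v : ℚ) - r) / M⌋ : ℚ) - ⌊(((0 : ℕ) : ℚ) - r) / M⌋) 0 with ⟨e1, e2⟩ | ⟨e1, e2⟩ <;>
        rw [e1] <;> constructor <;> linarith
    have hr : |(c : ℝ) - (v : ℝ) / M| ≤ 1 := by
      have := (Rat.cast_le (K := ℝ)).2 hq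
      push_cast at this
      exact this
    have h3 : |(v : ℝ) / M - x * f r / M| ≤ 1 := by
      rw [← sub_div, abs_div, abs_of_pos hMr, div_le_one hMr, abs_le]
      have : (1 : ℝ) ≤ M := by exact_mod_cast hM
      constructor <;> linarith
    exact (abs_sub_le _ ((v : ℝ) / M) _).trans (by linarith)
  rw [Set.ncard_coe_finset, hcard, Finset.sum_div, Finset.mul_sum, Nat.cast_sum,
    ← Finset.sum_sub_distrib]
  refine (Finset.abs_sum_le_sum_abs _ _).trans ?_
  calc _ ≤ ∑ r ∈ Finset.range M, (2 : ℝ) := Finset.sum_le_sum fun r hr => by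
        rw [← mul_div_assoc]; exact hclass r hr
    _ = 2 * M := by simp [mul_comm]

lemma card_range_dvd {M d : ℕ} (h : d ∣ M) (hM : 0 < M) :
    ∑ n ∈ Finset.range M with d ∣ n, (1 : ℝ) = M / d := by
  obtain ⟨k, rfl⟩ := h
  have hd : 0 < d := Nat.pos_of_mul_pos_right hM
  have : (Finset.range (d * k)).filter (d ∣ ·) = (Finset.range k).image (d * ·) := by
    ext n
    simp only [Finset.mem_filter, Finset.mem_range, Finset.mem_image]
    constructor
    · rintro ⟨h1, j, rfl⟩
      exact ⟨j, lt_of_mul_lt_mul_left h1 (Nat.zero_le _), rfl⟩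
    · rintro ⟨j, hj, rfl⟩
      exact ⟨Nat.mul_lt_mul_of_pos_left hj hd, dvd_mul_right _ _⟩
  rw [this, Finset.sum_const, Finset.card_image_of_injective _
    (fun a b h => Nat.eq_of_mul_eq_mul_left hd h)]
  have : (d : ℝ) ≠ 0 := by exact_mod_cast hd.ne'
  simp only [Finset.card_range, nsmul_eq_mul, mul_one]
  push_cast
  field_simp

/-- The count of `n ≥ 1` with `n ≤ x f_P(n)`, where `f_P(n) = ∏_{p ∈ P, p ∣ n} p / (p - 1)`. -/
lemma localProd_count {P : Finset ℕ} (hP : ∀ p ∈ P, p.Prime) : ∃ D : ℝ, 0 ≤ D ∧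
    ∀ x : ℝ, 0 ≤ x → {n : ℕ | 0 < n ∧ (n : ℝ) ≤ x * localProd phiWeight P n}.Finite ∧
    |({n : ℕ | 0 < n ∧ (n : ℝ) ≤ x * localProd phiWeight P n}.ncard : ℝ) - x * eulerFin P|
      ≤ D := by
  set M := ∏ p ∈ P, p with hMdef
  have hM : 0 < M := Finset.prod_pos fun p hp => (hP p hp).pos
  refine ⟨2 * M, by positivity, fun x hx => ?_⟩
  have hper : ∀ n, localProd phiWeight P (n % M) = localProd phiWeight P n := fun n => by
    rw [localProd, localProd]
    refine Finset.prod_congr (Finset.filter_congr fun p hp => ?_) fun _ _ => rfl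
    exact Nat.dvd_mod_iff (Finset.dvd_prod_of_mem _ hp)
  have hmean : (∑ r ∈ Finset.range M, localProd phiWeight P r) / M = eulerFin P := by
    have h := sum_mul_localProd phiWeight (fun _ => 1) hP (Finset.range M)
    have h2 := sum_powerset_prod_div phiWeight P M
    simp only [one_mul] at h
    have hMr : (M : ℝ) ≠ 0 := by exact_mod_cast hM.ne'
    rw [h, div_eq_iff hMr, mul_comm, eulerFin, ← h2]
    refine Finset.sum_congr rfl fun S hS => ?_
    rw [card_range_dvd (Finset.prod_dvd_prod_of_subset _ _ _ (Finset.mem_powerset.1 hS)) hM]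
  rw [← hmean]
  exact periodic_count hM hper (fun n => zero_le_one.trans (one_le_localProd hP n)) hx

/-! ### The number of integers with totient at most `B` -/

lemma localProd_mono {P Q : Finset ℕ} (h : P ⊆ Q) (hQ : ∀ p ∈ Q, p.Prime) (n : ℕ) :
    localProd phiWeight P n ≤ localProd phiWeight Q n := by
  have hw : ∀ p ∈ Q, 1 ≤ 1 + phiWeight p := fun p hp => by linarith [phiWeight_pos (hQ p hp)]
  exact Finset.prod_le_prod_of_subset_of_one_le (Finset.filter_subset_filter _ h)
    (fun p hp => zero_le_one.trans (hw p (h (Finset.mem_filter.1 hp).1)))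
    fun p hp _ => hw p (Finset.mem_filter.1 hp).1

/-- Truncation only decreases `n / φ(n)`, whence the lower bound for `Ψ_B`. -/
lemma localProd_set_subset {P : Finset ℕ} (hP : ∀ p ∈ P, p.Prime) (B : ℝ) :
    {n : ℕ | 0 < n ∧ (n : ℝ) ≤ B * localProd phiWeight P n} ⊆ PsiSet B := by
  rintro n ⟨hn, h⟩
  refine ⟨hn, ?_⟩
  have hU : ∀ p ∈ P ∪ Nat.primesBelow (n + 1), p.Prime := fun p hp =>
    (Finset.mem_union.1 hp).elim (hP p) Nat.prime_of_mem_primesBelow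
  have h1 := eq_totient_mul_localProd hU hn fun p hp hpn =>
    Finset.mem_union_right _ (Nat.mem_primesBelow.2
      ⟨Nat.lt_succ_of_le (Nat.le_of_dvd hn hpn), hp⟩)
  have h2 := localProd_mono Finset.subset_union_left hU n
  have h3 := one_le_localProd hP n
  have h4 : (n.totient : ℝ) * localProd phiWeight P n ≤ B * localProd phiWeight P n :=
    (mul_le_mul_of_nonneg_left h2 (Nat.cast_nonneg _)).trans (h1 ▸ h)
  exact le_of_mul_le_mul_right h4 (by linarith)

/-- First moment estimate: few `n ≤ Z` have `n / φ(n)` noticeably larger than its truncation to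
the primes in `P`. -/
lemma card_bad_le {P : Finset ℕ} (hP : ∀ p ∈ P, p.Prime) (ε : ℝ) (Z : ℕ) :
    ε * (((Finset.Ioc 0 Z).filter (fun n : ℕ =>
      (1 + ε) * (n.totient * localProd phiWeight P n) < n)).card : ℝ) ≤
      Z * (zetaR 2 * zetaR 3 / zetaR 6 / eulerFin P - 1) := by
  set Q := Nat.primesBelow (Z + 1) \ P with hQdef
  have hQ : ∀ p ∈ Q, p.Prime := fun p hp =>
    Nat.prime_of_mem_primesBelow (Finset.mem_sdiff.1 hp).1
  have hU : ∀ p ∈ P ∪ Q, p.Prime := fun p hp => (Finset.mem_union.1 hp).elim (hP p) (hQ p)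
  have hdisj : Disjoint P Q := Finset.disjoint_sdiff
  have hsplit : ∀ n, localProd phiWeight (P ∪ Q) n =
      localProd phiWeight P n * localProd phiWeight Q n := fun n => by
    rw [localProd, Finset.filter_union, Finset.prod_union]
    · rfl
    · exact Finset.disjoint_filter_filter hdisj
  have hcard : ∀ d : ℕ, 0 < d → ∑ n ∈ Finset.Ioc 0 Z with d ∣ n, (1 : ℝ) ≤ (Z : ℝ) / d := by
    intro d _
    rw [Finset.sum_const, Nat.Ioc_filter_dvd_card_eq_div, nsmul_eq_mul, mul_one]
    exact Nat.cast_div_le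
  have h1 := sum_mul_localProd_le (fun _ => 1) hQ (fun p hp => (phiWeight_pos (hQ p hp)).le)
    (Finset.Ioc 0 Z) Z hcard
  simp only [one_mul] at h1
  have hPpos : 0 < eulerFin P :=
    Finset.prod_pos fun p hp => zero_lt_one.trans_le (one_le_factor (hP p hp))
  have h2 : ∏ p ∈ Q, (1 + phiWeight p / p) ≤ zetaR 2 * zetaR 3 / zetaR 6 / eulerFin P := by
    rw [le_div_iff₀ hPpos]
    have := eulerFin_le hU
    rw [eulerFin, Finset.prod_union hdisj] at this
    rw [eulerFin, mul_comm]
    exact this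
  have h3 : ∑ n ∈ Finset.Ioc 0 Z, (localProd phiWeight Q n - 1) ≤
      Z * (zetaR 2 * zetaR 3 / zetaR 6 / eulerFin P - 1) := by
    rw [Finset.sum_sub_distrib, Finset.sum_const, Nat.card_Ioc, nsmul_eq_mul, mul_one,
      Nat.sub_zero, mul_sub, mul_one]
    have := mul_le_mul_of_nonneg_left h2 (Nat.cast_nonneg (α := ℝ) Z)
    linarith
  refine le_trans ?_ h3
  rw [mul_comm, ← nsmul_eq_mul, ← Finset.sum_const]
  refine le_trans (Finset.sum_le_sum fun n hn => ?_) (Finset.sum_le_sum_of_subset_of_nonneg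
    (Finset.filter_subset _ _) fun n _ _ => sub_nonneg.2 (one_le_localProd hQ n))
  obtain ⟨hn, hlt⟩ := Finset.mem_filter.1 hn
  obtain ⟨hn0, hnZ⟩ := Finset.mem_Ioc.1 hn
  have h4 : (n : ℝ) = _ := eq_totient_mul_localProd hU hn0 fun p hp hpn => by
    have hmem : p ∈ Nat.primesBelow (Z + 1) := Nat.mem_primesBelow.2
      ⟨Nat.lt_succ_of_le ((Nat.le_of_dvd hn0 hpn).trans hnZ), hp⟩
    rw [hQdef, Finset.union_sdiff_self_eq_union]
    exact Finset.mem_union_right _ hmem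
  have hφ : (0 : ℝ) < n.totient := by exact_mod_cast Nat.totient_pos.2 hn0
  have h5 : 0 < n.totient * localProd phiWeight P n :=
    mul_pos hφ (by linarith [one_le_localProd hP n])
  rw [h4, hsplit, ← mul_assoc (n.totient : ℝ), mul_comm (1 + ε)] at hlt
  have := lt_of_mul_lt_mul_left hlt h5.le
  linarith

/-- Chebyshev's inequality for the second moment: few `n > X` have `φ(n) ≤ B`. -/
lemma exists_card_tail_le : ∃ C : ℝ, 0 < C ∧ ∀ (B : ℝ) (X : ℕ), 0 < X →
    ((PsiSet B ∩ Set.Ioi X).ncard : ℝ) ≤ B ^ 2 * (C / X) := by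
  obtain ⟨C, hC, h⟩ := exists_tail_bound
  refine ⟨C, hC, fun B X hX => ?_⟩
  have hfin : (PsiSet B ∩ Set.Ioi X).Finite := (PsiSet_finite B).inter_of_left _
  set A := hfin.toFinset with hA
  obtain ⟨Y, hY⟩ := A.bddAbove
  rw [Set.ncard_eq_toFinset_card _ hfin, ← hA]
  calc (A.card : ℝ) = ∑ n ∈ A, (1 : ℝ) := by simp
    _ ≤ ∑ n ∈ A, B ^ 2 * ((n.totient : ℝ) ^ 2)⁻¹ := by
        refine Finset.sum_le_sum fun n hn => ?_
        obtain ⟨⟨h0, hB⟩, -⟩ := hfin.mem_toFinset.1 hn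
        have hφ : (0 : ℝ) < n.totient := by exact_mod_cast Nat.totient_pos.2 h0
        rw [← div_eq_mul_inv, one_le_div (by positivity)]
        gcongr
    _ ≤ ∑ n ∈ Finset.Ioc X Y, B ^ 2 * ((n.totient : ℝ) ^ 2)⁻¹ := by
        refine Finset.sum_le_sum_of_subset_of_nonneg (fun n hn => ?_) fun _ _ _ => by positivity
        exact Finset.mem_Ioc.2 ⟨(hfin.mem_toFinset.1 hn).2, hY hn⟩
    _ ≤ B ^ 2 * (C / X) := by
        rw [← Finset.mul_sum]
        exact mul_le_mul_of_nonneg_left (h X Y hX) (sq_nonneg B)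

/-- The three-way splitting of `Ψ_B` behind the upper bound: `n` controlled by its truncation, `n ≤ Z`
with a large contribution of the primes outside `P`, and `n > Z`. -/
lemma ncard_PsiSet_le {P : Finset ℕ} (hP : ∀ p ∈ P, p.Prime) {ε : ℝ} (hε : 0 < ε) {B : ℝ}
    (hB : 0 ≤ B) (Z : ℕ) :
    (PsiSet B).ncard ≤
      {n : ℕ | 0 < n ∧ (n : ℝ) ≤ (1 + ε) * B * localProd phiWeight P n}.ncard +
      ((Finset.Ioc 0 Z).filter (fun n : ℕ =>
        (1 + ε) * (n.totient * localProd phiWeight P n) < n)).card +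
      (PsiSet B ∩ Set.Ioi Z).ncard := by
  obtain ⟨D, -, hD⟩ := localProd_count hP
  have hfin := (hD ((1 + ε) * B) (by positivity)).1
  set S1 := {n : ℕ | 0 < n ∧ (n : ℝ) ≤ (1 + ε) * B * localProd phiWeight P n}
  set S2 := (Finset.Ioc 0 Z).filter (fun n : ℕ =>
        (1 + ε) * (n.totient * localProd phiWeight P n) < n) with hS2
  have hsub : PsiSet B ⊆ (S1 ∪ S2) ∪ (PsiSet B ∩ Set.Ioi Z) := by
    rintro n ⟨hn, hφ⟩
    by_cases h1 : Z < n
    · exact Or.inr ⟨⟨hn, hφ⟩, h1⟩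
    refine Or.inl ?_
    by_cases h2 : (1 + ε) * (n.totient * localProd phiWeight P n) < n
    · exact Or.inr (Finset.mem_coe.2 (Finset.mem_filter.2
        ⟨Finset.mem_Ioc.2 ⟨hn, not_lt.1 h1⟩, h2⟩))
    · refine Or.inl ⟨hn, (not_lt.1 h2).trans ?_⟩
      have := one_le_localProd hP n
      rw [← mul_assoc]
      gcongr
  refine (Set.ncard_le_ncard hsub ((hfin.union S2.finite_toSet).union
    ((PsiSet_finite B).inter_of_left _))).trans ?_
  refine (Set.ncard_union_le _ _).trans (Nat.add_le_add_right ?_ _)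
  refine (Set.ncard_union_le _ _).trans ?_
  rw [Set.ncard_coe_finset]

/-- `#{n ≥ 1 : φ(n) ≤ m} ∼ (ζ(2) ζ(3) / ζ(6)) m`. -/
lemma tendsto_ncard_PsiSet :
    Tendsto (fun m : ℕ => ((PsiSet m).ncard : ℝ) / m) atTop
      (nhds (zetaR 2 * zetaR 3 / zetaR 6)) := by
  obtain ⟨C, hC, hTail⟩ := exists_card_tail_le
  have hbad := fun (P : Finset ℕ) (hP : ∀ p ∈ P, p.Prime) => card_bad_le hP
  have heul := fun (P : Finset ℕ) (hP : ∀ p ∈ P, p.Prime) => eulerFin_le hP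
  have hex := fun (x : ℝ) => exists_lt_eulerFin (x := x)
  have hc : 1 ≤ zetaR 2 * zetaR 3 / zetaR 6 := by
    simpa [eulerFin] using heul ∅ (by simp)
  generalize zetaR 2 * zetaR 3 / zetaR 6 = c at *
  rw [tendsto_order]
  constructor
  · intro a ha
    obtain ⟨P, hP, hPa⟩ := hex ((a + c) / 2) (by linarith)
    obtain ⟨D, hD0, hD⟩ := localProd_count hP
    filter_upwards [tendsto_natCast_atTop_atTop.eventually_gt_atTop (2 * D / (c - a)),
      eventually_gt_atTop 0] with m hm hm0
    have hm0' : (0 : ℝ) < m := by exact_mod_cast hm0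
    have h1 := (abs_le.1 (hD m hm0'.le).2).1
    have h2 : (({n : ℕ | 0 < n ∧ (n : ℝ) ≤ m * localProd phiWeight P n}.ncard : ℕ) : ℝ) ≤
        (PsiSet m).ncard := by
      exact_mod_cast Set.ncard_le_ncard (localProd_set_subset hP m) (PsiSet_finite m)
    rw [div_lt_iff₀ (by linarith)] at hm
    rw [lt_div_iff₀ hm0']
    nlinarith [mul_lt_mul_of_pos_left hPa hm0']
  · intro b hb
    -- The excess `η` is shared out in fifths: `ε c`, the bad set, the tail and the rounding error `D`.
    set η := b - c with hη
    have hη0 : 0 < η := by linarith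
    have hc0 : 0 < c := by linarith
    set ε := η / (5 * c) with hεdef
    have hε : 0 < ε := by positivity
    obtain ⟨T, hT⟩ := exists_nat_gt (5 * C / η)
    have hT0 : (0 : ℝ) < T := lt_trans (by positivity) hT
    set δ := ε * η / (5 * T) with hδdef
    have hδ : 0 < δ := by positivity
    obtain ⟨P, hP, hPc⟩ := hex (c / (1 + δ)) (by
      rw [div_lt_iff₀ (by linarith)]; nlinarith)
    obtain ⟨D, hD0, hD⟩ := localProd_count hP
    have heP := heul P hP
    have hPpos : 0 < eulerFin P := lt_trans (by positivity) hPc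
    have hratio : c / eulerFin P - 1 ≤ δ := by
      rw [div_lt_iff₀ (by linarith)] at hPc
      rw [sub_le_iff_le_add, div_le_iff₀ hPpos]
      linarith
    filter_upwards [tendsto_natCast_atTop_atTop.eventually_gt_atTop (5 * D / η),
      eventually_gt_atTop 0] with m hm hm0
    have hm0' : (0 : ℝ) < m := by exact_mod_cast hm0
    have hTm : 0 < T * m := Nat.mul_pos (by exact_mod_cast hT0) hm0
    have h0 : ((PsiSet m).ncard : ℝ) ≤ _ := Nat.cast_le.2 (ncard_PsiSet_le hP hε hm0'.le (T * m))
    have h1 := (abs_le.1 (hD ((1 + ε) * m) (by positivity)).2).2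
    have h2 := hbad P hP ε (T * m)
    have h3 := hTail m (T * m) hTm
    push_cast at h0 h2 h3
    have h4 : (1 + ε) * m * eulerFin P ≤ m * (c + η / 5) := by
      have : (1 + ε) * eulerFin P ≤ c + η / 5 := by
        have e : ε * c = η / 5 := by rw [hεdef]; field_simp
        nlinarith
      nlinarith
    have h5 : (((Finset.Ioc 0 (T * m)).filter (fun n : ℕ =>
        (1 + ε) * (n.totient * localProd phiWeight P n) < n)).card : ℝ) ≤ m * (η / 5) := by
      refine le_of_mul_le_mul_left (h2.trans ?_) hε
      calc (T : ℝ) * m * (c / eulerFin P - 1) ≤ T * m * δ := by gcongr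
        _ = ε * (m * (η / 5)) := by rw [hδdef]; field_simp
    have h6 : (m : ℝ) ^ 2 * (C / (T * m)) ≤ m * (η / 5) := by
      have e : (m : ℝ) ^ 2 * (C / (T * m)) = m * (C / T) := by field_simp
      rw [e]
      refine mul_le_mul_of_nonneg_left ?_ hm0'.le
      rw [div_lt_iff₀ hη0] at hT
      rw [div_le_iff₀ hT0]
      linarith
    have h7 : D ≤ m * (η / 5) := by
      rw [div_lt_iff₀ hη0] at hm
      linarith
    rw [div_lt_iff₀ hm0']
    have h8 : b * m = m * c + m * η := by rw [hη]; ring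
    have h9 : 0 < (m : ℝ) * η := by positivity
    linarith

/-! ### Summation by parts -/

/-- The set `Ψ_m` as a finset. -/
noncomputable def psiFinset (m : ℕ) : Finset ℕ := (PsiSet_finite (m : ℝ)).toFinset

lemma mem_psiFinset {m n : ℕ} : n ∈ psiFinset m ↔ 0 < n ∧ n.totient ≤ m := by
  rw [psiFinset, Set.Finite.mem_toFinset]
  exact and_congr_right fun _ => Nat.cast_le

/-- Summation by parts, from `φ(n) = m - #{k < m : φ(n) ≤ k}` on `Ψ_m`. -/
lemma sum_totient_eq (m : ℕ) :
    ∑ n ∈ psiFinset m, (n.totient : ℝ) =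
      m * (psiFinset m).card - ∑ k ∈ Finset.range m, ((psiFinset k).card : ℝ) := by
  have h1 : ∀ n ∈ psiFinset m, (n.totient : ℝ) =
      m - ∑ k ∈ Finset.range m, if n.totient ≤ k then (1 : ℝ) else 0 := by
    intro n hn
    have hle := (mem_psiFinset.1 hn).2
    have : (Finset.range m).filter (n.totient ≤ ·) = Finset.Ico n.totient m := by
      ext k; simp [and_comm]
    rw [← Finset.sum_filter, this]
    simp [Nat.cast_sub hle]
  rw [Finset.sum_congr rfl h1, Finset.sum_sub_distrib, Finset.sum_comm, Finset.sum_const,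
    nsmul_eq_mul, mul_comm]
  congr 1
  refine Finset.sum_congr rfl fun k hk => ?_
  have : (psiFinset m).filter (fun n => n.totient ≤ k) = psiFinset k := by
    ext n
    have := Finset.mem_range.1 hk
    simp only [Finset.mem_filter, mem_psiFinset]
    constructor
    · rintro ⟨⟨h1, _⟩, h2⟩; exact ⟨h1, h2⟩
    · rintro ⟨h1, h2⟩; exact ⟨⟨h1, by omega⟩, h2⟩
  rw [← Finset.sum_filter, this]
  simp

lemma tendsto_sum_totient :
    Tendsto (fun m : ℕ => (∑ n ∈ psiFinset m, (n.totient : ℝ)) / (m : ℝ) ^ 2) atTop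
      (nhds (zetaR 2 * zetaR 3 / (2 * zetaR 6))) := by
  have hN : Tendsto (fun m : ℕ => ((psiFinset m).card : ℝ) / m) atTop
      (nhds (zetaR 2 * zetaR 3 / zetaR 6)) := by
    refine tendsto_ncard_PsiSet.congr fun m => ?_
    rw [Set.ncard_eq_toFinset_card _ (PsiSet_finite _)]
    rfl
  -- This is `c / 2 = c - c / 2`, in the shape produced by the limit laws below.
  have hval : zetaR 2 * zetaR 3 / (2 * zetaR 6) =
      zetaR 2 * zetaR 3 / zetaR 6 - (0 * (1 / 2) + zetaR 2 * zetaR 3 / zetaR 6 * (1 / 2)) := by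
    rw [mul_comm 2, ← div_div]; ring
  rw [hval]
  generalize zetaR 2 * zetaR 3 / zetaR 6 = c at *
  have hR : ∀ m : ℕ, ∑ k ∈ Finset.range m, (k : ℝ) = m * (m - 1) / 2 := fun m => by
    induction m with
    | zero => simp
    | succ m ih => rw [Finset.sum_range_succ, ih]; push_cast; ring
  have hRlim : Tendsto (fun m : ℕ => (∑ k ∈ Finset.range m, (k : ℝ)) / (m : ℝ) ^ 2) atTop
      (nhds (1 / 2)) := by
    have : Tendsto (fun m : ℕ => (1 - (m : ℝ)⁻¹) / 2) atTop (nhds ((1 - 0) / 2)) :=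
      (tendsto_const_nhds.sub tendsto_inv_atTop_nhds_zero_nat).div_const 2
    rw [sub_zero] at this
    refine this.congr' ?_
    filter_upwards [eventually_gt_atTop 0] with m hm
    have : (m : ℝ) ≠ 0 := by exact_mod_cast hm.ne'
    rw [hR]
    field_simp
  have hRtop : Tendsto (fun m : ℕ => ∑ k ∈ Finset.range m, (k : ℝ)) atTop atTop := by
    refine tendsto_atTop_mono' _ ?_ tendsto_natCast_atTop_atTop
    filter_upwards [eventually_ge_atTop 3] with m hm
    have : (3 : ℝ) ≤ m := by exact_mod_cast hm
    rw [hR]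
    nlinarith
  have hlo : (fun k : ℕ => ((psiFinset k).card : ℝ) - c * k) =o[atTop] fun k : ℕ => (k : ℝ) := by
    rw [Asymptotics.isLittleO_iff_tendsto']
    · refine (tendsto_sub_nhds_zero_iff.2 hN).congr' ?_
      filter_upwards [eventually_gt_atTop 0] with m hm
      have : (m : ℝ) ≠ 0 := by exact_mod_cast hm.ne'
      field_simp
    · filter_upwards [eventually_gt_atTop 0] with m hm h
      exact absurd h (by exact_mod_cast hm.ne')
  have hsum := (hlo.sum_range (fun k => Nat.cast_nonneg k) hRtop).tendsto_div_nhds_zero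
  refine (hN.sub ((hsum.mul hRlim).add (hRlim.const_mul c))).congr' ?_
  filter_upwards [eventually_gt_atTop 0, hRtop.eventually_gt_atTop 0] with m hm hRm
  have hm' : (m : ℝ) ≠ 0 := by exact_mod_cast hm.ne'
  rw [sum_totient_eq, Finset.sum_sub_distrib, ← Finset.mul_sum]
  generalize ∑ k ∈ Finset.range m, (k : ℝ) = r at hRm
  have hr : r ≠ 0 := hRm.ne'
  field_simp
  ring

/-- The cardinality of the zero set, `|𝓕_B| = ∑_{b ∈ Ψ_B} φ(b)`, is asymptotically
`(½·ζ(2)ζ(3)/ζ(6))·B²` as `B → ∞`. -/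
theorem card_zeroSet_asymptotic :
    Tendsto (fun B : ℝ => (∑ᶠ b ∈ PsiSet B, (Nat.totient b : ℝ)) / B ^ 2) atTop
      (nhds (zetaR 2 * zetaR 3 / (2 * zetaR 6))) := by
  have h1 := (tendsto_sum_totient.comp (tendsto_nat_floor_atTop (α := ℝ))).mul
    ((tendsto_nat_floor_div_atTop (R := ℝ)).pow 2)
  rw [one_pow, mul_one] at h1
  refine h1.congr' ?_
  filter_upwards [eventually_ge_atTop 1] with B hB
  have hset : PsiSet B = psiFinset ⌊B⌋₊ := by
    ext n
    rw [Finset.mem_coe, mem_psiFinset, Nat.le_floor_iff (by linarith)]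
    rfl
  have hfl : ((⌊B⌋₊ : ℕ) : ℝ) ≠ 0 := by
    have := Nat.floor_pos.2 hB
    exact_mod_cast this.ne'
  have hB0 : B ≠ 0 := by linarith
  rw [hset, finsum_mem_coe_finset]
  simp only [Function.comp_apply]
  field_simp
end

section
/- There exists an absolute constant B₀ such that for all real B ≥ B₀ one has |𝓕_B| ≤ B², i.e. ∑_{b: φ(b) ≤ B} φ(b) ≤ B². -/
/-!
The local densities of `f(b) = b / φ(b)` give `∑_{φ(b) ≤ B} φ(b) ~ (c / 2) B²` with
`c = ∏ (1 + 1 / (p (p - 1))) = 1.9435…`, and `c < 2` is what makes the bound hold. Only an upper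
bound with a small loss is needed.

Let `f_P(b)` be the part of the product `f(b) = ∏_{p ∣ b} p / (p - 1)` over a fixed set `P` of
small primes, and `t = 401/400`. Split the `b` with `φ(b) ≤ B`, that is, with `b ≤ B f(b)`.

* If `b ≤ t B f_P(b)`, then `φ(b) ≤ b / f_P(b)`. As `f_P` is periodic, these terms sum to
  `(t² / 2) B²` times the mean of `f_P`, up to `O_P(B)` (`main_le`). The mean is a partial product
  of `c`, bounded in `prod_lin_le`.
* Otherwise `b > B`, and `f(b)² - f_P(b)²` is at least a fixed proportion of `(b / B)²`
  (`pointwise_le`). So these terms are at most a constant times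
  `B³ ∑_{b > B} (f(b)² - f_P(b)²) / b²`. Expanding both squares over squarefree divisors bounds this
  by `B²` times the tail of a convergent Euler product (`tail_le`), which is small once `P` is large
  (`exists_quad_tail`).
-/

open Filter Real

/-! ### Truncated products over primes -/

/-- `trunc a P b = ∏ (1 + a p)` over the primes `p ∈ P` dividing `b`. -/
noncomputable def trunc (a : ℕ → ℝ) (P : Finset ℕ) (b : ℕ) : ℝ :=
  ∏ p ∈ P, (1 + if p ∣ b then a p else 0)

/-- `1 + lin p = p / (p - 1)` is the local factor of `b / φ b`. -/
noncomputable def lin (p : ℕ) : ℝ := 1 / ((p : ℝ) - 1)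

/-- `1 + quad p = (p / (p - 1))²` is the local factor of `(b / φ b)²`. -/
noncomputable def quad (p : ℕ) : ℝ := (1 + lin p) ^ 2 - 1

lemma lin_nonneg {p : ℕ} (hp : p.Prime) : 0 ≤ lin p := by
  have : (2 : ℝ) ≤ p := by exact_mod_cast hp.two_le
  unfold lin
  apply div_nonneg <;> linarith

lemma quad_nonneg {p : ℕ} (hp : p.Prime) : 0 ≤ quad p := by
  have := lin_nonneg hp
  unfold quad
  nlinarith

lemma trunc_quad (P : Finset ℕ) (b : ℕ) : trunc quad P b = trunc lin P b ^ 2 := by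
  unfold trunc
  rw [← Finset.prod_pow]
  refine Finset.prod_congr rfl fun p _ => ?_
  split_ifs <;> simp [quad]

lemma prod_one_add_mono {a : ℕ → ℝ} {P Q : Finset ℕ} (hPQ : P ⊆ Q) (ha : ∀ p ∈ Q, 0 ≤ a p) :
    ∏ p ∈ P, (1 + a p) ≤ ∏ p ∈ Q, (1 + a p) := by
  rw [Finset.prod_one_add, Finset.prod_one_add]
  exact Finset.sum_le_sum_of_subset_of_nonneg (Finset.powerset_mono.2 hPQ) fun s hs _ =>
    Finset.prod_nonneg fun p hp => ha p (Finset.mem_powerset.1 hs hp)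

lemma trunc_lin_mono {P Q : Finset ℕ} (hPQ : P ⊆ Q) (hQ : ∀ p ∈ Q, p.Prime) (b : ℕ) :
    trunc lin P b ≤ trunc lin Q b := by
  refine prod_one_add_mono hPQ fun p hp => ?_
  split_ifs
  exacts [lin_nonneg (hQ p hp), le_rfl]

lemma one_le_trunc_lin {P : Finset ℕ} (hP : ∀ p ∈ P, p.Prime) (b : ℕ) : 1 ≤ trunc lin P b := by
  simpa [trunc] using trunc_lin_mono (Finset.empty_subset P) hP b

lemma trunc_expand (a : ℕ → ℝ) {P : Finset ℕ} (hP : ∀ p ∈ P, p.Prime) (b : ℕ) :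
    trunc a P b = ∑ s ∈ P.powerset, if (∏ p ∈ s, p) ∣ b then ∏ p ∈ s, a p else 0 := by
  unfold trunc
  rw [Finset.prod_one_add]
  refine Finset.sum_congr rfl fun s hs => ?_
  rw [Finset.prod_ite_zero]
  refine if_congr ⟨fun h => ?_, fun h p hp => (Finset.dvd_prod_of_mem _ hp).trans h⟩ rfl rfl
  exact Finset.prod_primes_dvd b (fun p hp => (hP p (Finset.mem_powerset.1 hs hp)).prime) h

lemma trunc_lin_eq {P : Finset ℕ} (hP : ∀ p ∈ P, p.Prime) {b : ℕ} (hb : b ≠ 0)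
    (hbP : b.primeFactors ⊆ P) : (b : ℝ) = trunc lin P b * b.totient := by
  have h1 : trunc lin P b = ∏ p ∈ b.primeFactors, (1 + lin p) := by
    unfold trunc
    rw [← Finset.prod_subset hbP]
    · refine Finset.prod_congr rfl fun p hp => ?_
      rw [if_pos (Nat.dvd_of_mem_primeFactors hp)]
    · intro p hp hpb
      rw [if_neg, add_zero]
      exact fun h => hpb (Nat.mem_primeFactors.2 ⟨hP p hp, h, hb⟩)
  have h2 : (b.totient : ℝ) = b * ∏ p ∈ b.primeFactors, (1 - (p : ℝ)⁻¹) := by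
    have h := congrArg (fun q : ℚ => (q : ℝ)) (Nat.totient_eq_mul_prod_factors b)
    push_cast at h
    exact h
  rw [h1, h2, mul_left_comm, ← Finset.prod_mul_distrib, Finset.prod_eq_one, mul_one]
  intro p hp
  have : (2 : ℝ) ≤ p := by exact_mod_cast (Nat.prime_of_mem_primeFactors hp).two_le
  have h3 : (p : ℝ) - 1 ≠ 0 := by linarith
  unfold lin
  field_simp
  ring

/-! ### The contribution of large prime factors -/

/-- Divisibility by a fixed modulus `D` cuts the tail of `∑ 1 / b²` by the factor `D`. -/
lemma sum_inv_sq_dvd_le {B : ℝ} (hB : 0 < B) {D : ℕ} (hD : 0 < D) (X : ℕ) :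
    ∑ b ∈ (Finset.Icc 1 X).filter (fun b : ℕ => B < b), (if D ∣ b then 1 / (b : ℝ) ^ 2 else 0)
      ≤ 2 / B * (1 / D) := by
  have hD' : (0 : ℝ) < D := by exact_mod_cast hD
  rw [← Finset.sum_filter, Finset.filter_filter]
  have hsub : (Finset.Icc 1 X).filter (fun b : ℕ => B < b ∧ D ∣ b) ⊆
      (Finset.Ioo ⌊B / D⌋₊ (X + 1)).image (fun m => D * m) := by
    intro b hb
    simp only [Finset.mem_filter, Finset.mem_Icc] at hb
    obtain ⟨⟨h1, h2⟩, h3, m, rfl⟩ := hb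
    refine Finset.mem_image.2 ⟨m, Finset.mem_Ioo.2 ⟨?_, ?_⟩, rfl⟩
    · rw [Nat.floor_lt (by positivity), div_lt_iff₀ hD']
      push_cast at h3; linarith
    · have := Nat.le_mul_of_pos_left m hD
      omega
  refine (Finset.sum_le_sum_of_subset_of_nonneg hsub fun _ _ _ => by positivity).trans ?_
  rw [Finset.sum_image fun x _ y _ h => Nat.eq_of_mul_eq_mul_left hD h]
  have h1 : ∀ m ∈ Finset.Ioo ⌊B / D⌋₊ (X + 1), 1 / ((D * m : ℕ) : ℝ) ^ 2
      = 1 / (D : ℝ) ^ 2 * ((m : ℝ) ^ 2)⁻¹ := by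
    intro m _
    push_cast
    rw [mul_pow, one_div, mul_inv, one_div]
  rw [Finset.sum_congr rfl h1, ← Finset.mul_sum]
  have h2 : 2 / ((⌊B / D⌋₊ : ℝ) + 1) ≤ 2 / (B / D) := by
    gcongr
    exact (Nat.lt_floor_add_one _).le
  calc _ ≤ 1 / (D : ℝ) ^ 2 * (2 / (B / D)) := by
        gcongr; exact (sum_Ioo_inv_sq_le _ _).trans h2
    _ = _ := by field_simp

/-- `∑_{b > B} (f_Q(b)² - f_P(b)²) / b²` is at most `2 / B` times a difference of partial Euler
products: expanding, only divisors built from a prime outside `P` survive. -/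
lemma tail_le {B : ℝ} (hB : 0 < B) {P Q : Finset ℕ} (hPQ : P ⊆ Q) (hQ : ∀ p ∈ Q, p.Prime)
    (X : ℕ) :
    ∑ b ∈ (Finset.Icc 1 X).filter (fun b : ℕ => B < b),
        (trunc lin Q b ^ 2 - trunc lin P b ^ 2) / (b : ℝ) ^ 2
      ≤ 2 / B * (∏ p ∈ Q, (1 + quad p / p) - ∏ p ∈ P, (1 + quad p / p)) := by
  have hpow : P.powerset ⊆ Q.powerset := Finset.powerset_mono.2 hPQ
  have h1 : ∀ b : ℕ, (trunc lin Q b ^ 2 - trunc lin P b ^ 2) / (b : ℝ) ^ 2 =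
      ∑ s ∈ Q.powerset \ P.powerset, (∏ p ∈ s, quad p) *
        (if (∏ p ∈ s, p) ∣ b then 1 / (b : ℝ) ^ 2 else 0) := by
    intro b
    rw [← trunc_quad, ← trunc_quad, trunc_expand _ hQ, trunc_expand _ fun p hp => hQ p (hPQ hp),
      ← Finset.sum_sdiff hpow, add_sub_cancel_right, Finset.sum_div]
    refine Finset.sum_congr rfl fun s _ => ?_
    split_ifs <;> simp [div_eq_mul_inv]
  have h2 : ∏ p ∈ Q, (1 + quad p / p) - ∏ p ∈ P, (1 + quad p / p) =
      ∑ s ∈ Q.powerset \ P.powerset, ∏ p ∈ s, quad p / p := by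
    rw [Finset.prod_one_add, Finset.prod_one_add, ← Finset.sum_sdiff hpow, add_sub_cancel_right]
  rw [Finset.sum_congr rfl fun b _ => h1 b, Finset.sum_comm, h2, Finset.mul_sum]
  refine Finset.sum_le_sum fun s hs => ?_
  have hsQ : ∀ p ∈ s, p.Prime := fun p hp =>
    hQ p (Finset.mem_powerset.1 (Finset.mem_sdiff.1 hs).1 hp)
  rw [← Finset.mul_sum, Finset.prod_div_distrib]
  have h3 := sum_inv_sq_dvd_le hB (Finset.prod_pos fun p hp => (hsQ p hp).pos) X
  refine (mul_le_mul_of_nonneg_left h3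
    (Finset.prod_nonneg fun p hp => quad_nonneg (hsQ p hp))).trans_eq ?_
  push_cast
  ring

/-! ### Averages of periodic truncations -/

/-- The numbers `b ≤ L` in a residue class mod `M` sum to at most `(L + M)² / (2M)`. -/
lemma sum_residue_le {M r : ℕ} (hr : r < M) {L : ℝ} (hL : 0 ≤ L) (X : ℕ) :
    ∑ b ∈ (Finset.Icc 1 X).filter (fun b : ℕ => b % M = r ∧ (b : ℝ) ≤ L), (b : ℝ)
      ≤ (L + M) ^ 2 / (2 * M) := by
  have hM : 0 < M := by omega
  have hM' : (0 : ℝ) < M := by exact_mod_cast hM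
  set N := ⌊L⌋₊
  have hN : (N : ℝ) ≤ L := Nat.floor_le hL
  set K := (N + M - r) / M
  have hK : r + K * M ≤ N + M := by
    have : K * M ≤ N + M - r := Nat.div_mul_le_self (N + M - r) M
    omega
  have hsub : (Finset.Icc 1 X).filter (fun b : ℕ => b % M = r ∧ (b : ℝ) ≤ L) ⊆
      (Finset.range K).image (fun q => r + q * M) := by
    intro b hb
    simp only [Finset.mem_filter] at hb
    obtain ⟨-, h2, h3⟩ := hb
    have h4 : b ≤ N := Nat.le_floor h3
    have h5 := Nat.mod_add_div' b M
    refine Finset.mem_image.2 ⟨b / M, Finset.mem_range.2 ?_, by rw [← h2]; exact h5⟩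
    rw [← Nat.succ_le_iff, Nat.le_div_iff_mul_le hM, Nat.succ_mul]
    omega
  refine (Finset.sum_le_sum_of_subset_of_nonneg hsub fun _ _ _ => by positivity).trans ?_
  rw [Finset.sum_image fun x _ y _ h => Nat.eq_of_mul_eq_mul_right hM (Nat.add_left_cancel h)]
  -- telescoping, as `b ≤ ((b + M)² - b²) / (2M)`
  have key : ∀ n : ℕ, ∑ q ∈ Finset.range n, ((r + q * M : ℕ) : ℝ)
      ≤ ((r : ℝ) + n * M) ^ 2 / (2 * M) := by
    intro n
    induction n with
    | zero => simp; positivity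
    | succ n ih =>
      rw [Finset.sum_range_succ]
      refine (add_le_add_left ih _).trans ?_
      rw [div_add' _ _ _ (by positivity)]
      gcongr
      push_cast
      nlinarith
  refine (key K).trans ?_
  have hK' : (r : ℝ) + K * M ≤ N + M := by exact_mod_cast hK
  exact div_le_div_of_nonneg_right (pow_le_pow_left₀ (by positivity) (by linarith) 2)
    (by positivity)

/-- The mean of `trunc a P` over a full period is the Euler product `∏ (1 + a p / p)`. -/
lemma sum_trunc_period (a : ℕ → ℝ) {P : Finset ℕ} (hP : ∀ p ∈ P, p.Prime) :
    ∑ r ∈ Finset.range (∏ p ∈ P, p), trunc a P r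
      = ((∏ p ∈ P, p : ℕ) : ℝ) * ∏ p ∈ P, (1 + a p / p) := by
  simp_rw [trunc_expand a hP]
  rw [Finset.sum_comm, Finset.prod_one_add, Finset.mul_sum]
  refine Finset.sum_congr rfl fun s hs => ?_
  set M := ∏ p ∈ P, p
  have hsP := Finset.mem_powerset.1 hs
  have hd : (∏ p ∈ s, p) ∣ M := Finset.prod_dvd_prod_of_subset _ _ _ hsP
  have hDpos : 0 < ∏ p ∈ s, p := Finset.prod_pos fun p hp => (hP p (hsP hp)).pos
  have hcard : ((Finset.range M).filter (fun r => (∏ p ∈ s, p) ∣ r)).card = M / ∏ p ∈ s, p := by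
    have h := Nat.count_modEq_card M hDpos 0
    rw [Nat.count_eq_card_filter_range] at h
    simp only [Nat.modEq_zero_iff_dvd] at h
    rw [h]
    simp [Nat.mod_eq_zero_of_dvd hd]
  rw [← Finset.sum_filter, Finset.sum_const, hcard, nsmul_eq_mul,
    Nat.cast_div hd (by exact_mod_cast hDpos.ne'), Finset.prod_div_distrib]
  push_cast
  ring

lemma trunc_mod (a : ℕ → ℝ) (P : Finset ℕ) (b : ℕ) :
    trunc a P (b % ∏ p ∈ P, p) = trunc a P b := by
  unfold trunc
  refine Finset.prod_congr rfl fun p hp => ?_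
  simp only [Nat.dvd_mod_iff (Finset.dvd_prod_of_mem (fun p => p) hp)]

/-! ### Bounds for Euler products -/

/-- `∏ (1 + 1 / (p (p - 1))) < 1.9867`; the full product is `ζ(2)ζ(3)/ζ(6) = 1.9435…`. -/
lemma prod_lin_le (n : ℕ) : ∏ p ∈ Nat.primesBelow n, (1 + lin p / p) ≤ 1.9867 := by
  -- `1 - 1 / (m - 1)` grows by more than the factor `1 + 1 / (m (m - 1))` as `m` becomes `m + 1`,
  -- so the bound survives even if every integer beyond `36` is treated as a prime
  have key : ∀ m : ℕ, 37 ≤ m →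
      ∏ p ∈ Nat.primesBelow m, (1 + lin p / p) ≤ 1.9867 * (1 - 1 / ((m : ℝ) - 1)) := by
    intro m hm
    induction m, hm using Nat.le_induction with
    | base =>
      have h : Nat.primesBelow 37 = {2, 3, 5, 7, 11, 13, 17, 19, 23, 29, 31} := by
        simp [Nat.primesBelow, Finset.range_add_one, Finset.filter_insert,
          Nat.not_prime_one]
        norm_num [Finset.filter_insert, Finset.filter_singleton]
        decide
      rw [h]
      simp [lin]
      norm_num
    | succ m hm ih =>
      have hm' : (37 : ℝ) ≤ m := by exact_mod_cast hm
      have h1 : 1 - 1 / ((m : ℝ) - 1) ≤ 1 - 1 / (m : ℝ) := by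
        gcongr <;> linarith
      rw [Nat.primesBelow_succ]
      push_cast
      rw [add_sub_cancel_right]
      split_ifs with hp
      · rw [Finset.prod_insert (Nat.notMem_primesBelow m)]
        have h0 : 0 ≤ 1 + lin m / m := by
          have := lin_nonneg hp
          positivity
        refine (mul_le_mul_of_nonneg_left ih h0).trans ?_
        rw [mul_left_comm]
        gcongr
        have h3 : (0 : ℝ) < m - 1 := by linarith
        have h4 : (1 : ℝ) - 1 / m - (1 + lin m / m) * (1 - 1 / ((m : ℝ) - 1))
            = 1 / (m * ((m : ℝ) - 1) ^ 2) := by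
          unfold lin
          field_simp
          ring
        have : (0 : ℝ) ≤ 1 / (m * ((m : ℝ) - 1) ^ 2) := by positivity
        linarith
      · exact ih.trans (by gcongr)
  have h1 := key (n + 37) (by omega)
  have h2 : ∏ p ∈ Nat.primesBelow n, (1 + lin p / p)
      ≤ ∏ p ∈ Nat.primesBelow (n + 37), (1 + lin p / p) := by
    refine prod_one_add_mono (fun p hp => ?_) fun p hp => ?_
    · rw [Nat.mem_primesBelow] at hp ⊢
      exact ⟨by omega, hp.2⟩
    · exact div_nonneg (lin_nonneg (Nat.prime_of_mem_primesBelow hp)) (Nat.cast_nonneg p)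
  have h3 : (0 : ℝ) ≤ 1 / (((n + 37 : ℕ) : ℝ) - 1) := by
    push_cast
    have : (0 : ℝ) ≤ n := Nat.cast_nonneg n
    exact div_nonneg zero_le_one (by linarith)
  linarith

lemma quad_div_le {p : ℕ} (hp : p.Prime) : quad p / p ≤ 6 / (p : ℝ) ^ 2 := by
  have h2 : (2 : ℝ) ≤ p := by exact_mod_cast hp.two_le
  have h1 : (0 : ℝ) < p - 1 := by linarith
  have h3 : 6 / (p : ℝ) ^ 2 - quad p / p
      = (4 * p ^ 2 - 11 * p + 6) / (p ^ 2 * ((p : ℝ) - 1) ^ 2) := by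
    unfold quad lin
    field_simp
    ring
  have h4 : 0 ≤ (4 * (p : ℝ) ^ 2 - 11 * p + 6) / (p ^ 2 * ((p : ℝ) - 1) ^ 2) :=
    div_nonneg (by nlinarith) (by positivity)
  linarith

/-- The increasing products `∏_{p < n} (1 + quad p / p)` converge, in Cauchy form. -/
lemma exists_quad_tail {η : ℝ} (hη : 0 < η) : ∃ y : ℕ, ∀ z : ℕ,
    ∏ p ∈ Nat.primesBelow z, (1 + quad p / p)
      ≤ ∏ p ∈ Nat.primesBelow y, (1 + quad p / p) + η := by
  set W : ℕ → ℝ := fun n => ∏ p ∈ Nat.primesBelow n, (1 + quad p / p)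
  have hs : Summable fun n : ℕ => 6 / (n : ℝ) ^ 2 := by
    simpa [div_eq_mul_inv] using (Real.summable_nat_pow_inv.2 one_lt_two).mul_left 6
  have hbdd : BddAbove (Set.range W) := by
    refine ⟨Real.exp (∑' n : ℕ, 6 / (n : ℝ) ^ 2), ?_⟩
    rintro _ ⟨n, rfl⟩
    calc W n ≤ ∏ p ∈ Nat.primesBelow n, (1 + 6 / (p : ℝ) ^ 2) := by
          refine Finset.prod_le_prod (fun p hp => ?_) fun p hp => ?_
          · have := quad_nonneg (Nat.prime_of_mem_primesBelow hp)
            positivity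
          · have := quad_div_le (Nat.prime_of_mem_primesBelow hp)
            linarith
      _ ≤ Real.exp (∑ p ∈ Nat.primesBelow n, 6 / (p : ℝ) ^ 2) :=
          Real.prod_one_add_le_exp_sum _ fun _ => by positivity
      _ ≤ _ := Real.exp_le_exp.2 (hs.sum_le_tsum _ fun _ _ => by positivity)
  obtain ⟨y, hy⟩ := exists_lt_of_lt_ciSup (show (⨆ n, W n) - η < ⨆ n, W n by linarith)
  refine ⟨y, fun z => ?_⟩
  have := le_ciSup hbdd z
  change W z ≤ W y + η
  linarith

/-! ### The sum of totients -/

/-- The numbers `b` with `b ≤ T f_P(b)`, weighted by `b / f_P(b)`: a truncated form of the sum of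
totients. As `f_P` is periodic, the leading term comes from its mean value. -/
lemma main_le {P : Finset ℕ} (hP : ∀ p ∈ P, p.Prime) {T : ℝ} (hT : 0 < T) (X : ℕ) :
    ∑ b ∈ (Finset.Icc 1 X).filter (fun b : ℕ => (b : ℝ) ≤ T * trunc lin P b),
        (b : ℝ) / trunc lin P b
      ≤ T ^ 2 / 2 * ∏ p ∈ P, (1 + lin p / p) + ((∏ p ∈ P, p : ℕ) : ℝ) * T
        + ((∏ p ∈ P, p : ℕ) : ℝ) ^ 2 / 2 := by
  have hmean := sum_trunc_period lin hP
  have hmod := trunc_mod lin P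
  have hM : 0 < ∏ p ∈ P, p := Finset.prod_pos fun p hp => (hP p hp).pos
  set M := ∏ p ∈ P, p
  have hM' : (0 : ℝ) < M := by exact_mod_cast hM
  rw [← Finset.sum_fiberwise_of_maps_to (t := Finset.range M) (g := fun b => b % M)
    fun b _ => Finset.mem_range.2 (Nat.mod_lt b hM)]
  have hclass : ∀ r ∈ Finset.range M,
      ∑ b ∈ ((Finset.Icc 1 X).filter (fun b : ℕ => (b : ℝ) ≤ T * trunc lin P b)).filter
        (fun b => b % M = r), (b : ℝ) / trunc lin P b
      ≤ T ^ 2 / (2 * M) * trunc lin P r + T + M / 2 := by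
    intro r hr
    have hF := one_le_trunc_lin hP r
    have heq : ∀ b : ℕ, b % M = r → trunc lin P b = trunc lin P r := fun b hb => by
      rw [← hmod b, hb]
    have hfilter : ((Finset.Icc 1 X).filter (fun b : ℕ => (b : ℝ) ≤ T * trunc lin P b)).filter
        (fun b => b % M = r) = (Finset.Icc 1 X).filter
        (fun b : ℕ => b % M = r ∧ (b : ℝ) ≤ T * trunc lin P r) := by
      rw [Finset.filter_filter]
      refine Finset.filter_congr fun b _ => ⟨fun h => ⟨h.2, ?_⟩, fun h => ⟨?_, h.1⟩⟩
      · rw [← heq b h.2]; exact h.1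
      · rw [heq b h.1]; exact h.2
    rw [hfilter, Finset.sum_congr rfl fun b hb => by rw [heq b (Finset.mem_filter.1 hb).2.1],
      ← Finset.sum_div, div_le_iff₀ (by linarith)]
    refine (sum_residue_le (Finset.mem_range.1 hr) (by positivity) X).trans ?_
    set F := trunc lin P r
    have : (T ^ 2 / (2 * M) * F + T + M / 2) * F - (T * F + M) ^ 2 / (2 * M)
        = M / 2 * (F - 1) := by
      field_simp
      ring
    have h0 : 0 ≤ (M : ℝ) / 2 * (F - 1) := mul_nonneg (by positivity) (by linarith)
    linarith
  refine (Finset.sum_le_sum hclass).trans_eq ?_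
  rw [Finset.sum_add_distrib, Finset.sum_add_distrib, ← Finset.mul_sum, hmean]
  simp only [Finset.sum_const, Finset.card_range, nsmul_eq_mul]
  field_simp

/-- Either `b` is counted by the truncated sum, or `b > (401/400) B f_P(b)`; in the latter case
`φ b ≤ B` forces `f(b)² - f_P(b)²` to be a fixed proportion of `(b / B)²`. -/
lemma pointwise_le {B b F G t : ℝ} (hB : 0 < B) (hb : 0 < b) (hF : 1 ≤ F) (hFG : F ≤ G)
    (hbG : b = G * t) (ht : t ≤ B) :
    t ≤ (if b ≤ 401 / 400 * B * F then b / F else 0)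
      + 400 * B ^ 3 * (if B < b then (G ^ 2 - F ^ 2) / b ^ 2 else 0) := by
  have hGF : 0 ≤ G ^ 2 - F ^ 2 := by nlinarith
  by_cases h : b ≤ 401 / 400 * B * F
  · rw [if_pos h]
    have h1 : t ≤ b / F := by
      rw [le_div_iff₀ (by linarith)]
      have : 0 ≤ t := by
        by_contra hneg
        nlinarith
      nlinarith
    have h2 : 0 ≤ 400 * B ^ 3 * (if B < b then (G ^ 2 - F ^ 2) / b ^ 2 else 0) := by
      split_ifs <;> positivity
    linarith
  · rw [if_neg h, zero_add]
    push Not at h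
    have hBb : B < b := by nlinarith
    rw [if_pos hBb]
    refine ht.trans ?_
    have h1 : b ^ 2 ≤ (G * B) ^ 2 := by
      have : b ≤ G * B := by rw [hbG]; gcongr; linarith
      gcongr
    have h2 : (401 / 400 * B * F) ^ 2 ≤ b ^ 2 := by gcongr
    have h3 : b ^ 2 ≤ 400 * B ^ 2 * (G ^ 2 - F ^ 2) := by nlinarith
    have h4 : 1 ≤ 400 * B ^ 2 * (G ^ 2 - F ^ 2) / b ^ 2 := by
      rwa [one_le_div (by positivity)]
    calc B = B * 1 := (mul_one B).symm
      _ ≤ B * (400 * B ^ 2 * (G ^ 2 - F ^ 2) / b ^ 2) := by gcongr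
      _ = _ := by ring

/-- There is an absolute constant `B₀` such that for all `B ≥ B₀` one has
`|𝓕_B| = ∑_{b : φ(b) ≤ B} φ(b) ≤ B²`. -/
theorem card_zeroSet_le_sq :
    ∃ B₀ : ℝ, ∀ B : ℝ, B₀ ≤ B →
      (∑ᶠ b ∈ PsiSet B, (Nat.totient b : ℝ)) ≤ B ^ 2 := by
  obtain ⟨y, hy⟩ := exists_quad_tail (η := 1 / 10 ^ 6) (by norm_num)
  set P := Nat.primesBelow y
  have hP : ∀ p ∈ P, p.Prime := fun p hp => Nat.prime_of_mem_primesBelow hp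
  set M := ∏ p ∈ P, p with hMdef
  have hM : (1 : ℝ) ≤ M := by
    exact_mod_cast (Finset.prod_pos fun p hp => (hP p hp).pos : 0 < ∏ p ∈ P, p)
  refine ⟨10 ^ 6 * M, fun B hB => ?_⟩
  have hB0 : 0 < B := by linarith
  -- `PsiSet B` is finite, but the junk value `0` of the sum makes a proof of this unnecessary
  by_cases hfin : (PsiSet B).Finite
  swap
  · rw [finsum_mem_eq_zero_of_infinite]
    · positivity
    · refine fun h => hfin (h.subset fun b hb => ⟨hb, ?_⟩)
      simpa using hb.1.ne'
  rw [finsum_mem_eq_finite_toFinset_sum _ hfin]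
  obtain ⟨X, hX⟩ := hfin.bddAbove
  set Q := Nat.primesBelow (X + y + 1)
  have hQ : ∀ p ∈ Q, p.Prime := fun p hp => Nat.prime_of_mem_primesBelow hp
  have hPQ : P ⊆ Q := fun p hp => by
    rw [Nat.mem_primesBelow] at hp ⊢
    exact ⟨by omega, hp.2⟩
  have hpt : ∀ b ∈ hfin.toFinset, (b.totient : ℝ) ≤
      (if (b : ℝ) ≤ 401 / 400 * B * trunc lin P b then (b : ℝ) / trunc lin P b else 0)
      + 400 * B ^ 3 *
        (if B < b then (trunc lin Q b ^ 2 - trunc lin P b ^ 2) / (b : ℝ) ^ 2 else 0) := by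
    intro b hb
    have hb' := hfin.mem_toFinset.1 hb
    refine pointwise_le hB0 (by exact_mod_cast hb'.1) (one_le_trunc_lin hP b)
      (trunc_lin_mono hPQ hQ b) (trunc_lin_eq hQ hb'.1.ne' fun p hp => ?_) hb'.2
    have h1 := Nat.le_of_mem_primeFactors hp
    have h2 := hX hb'
    exact Nat.mem_primesBelow.2 ⟨by omega, Nat.prime_of_mem_primeFactors hp⟩
  have hsub : hfin.toFinset ⊆ Finset.Icc 1 X := fun b hb => by
    have hb' := hfin.mem_toFinset.1 hb
    exact Finset.mem_Icc.2 ⟨hb'.1, hX hb'⟩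
  have hmain := main_le hP (T := 401 / 400 * B) (by positivity) X
  have htail := tail_le hB0 hPQ hQ X
  rw [Finset.sum_filter] at hmain htail
  rw [← hMdef] at hmain
  have hc := prod_lin_le y
  have hη := hy (X + y + 1)
  refine (Finset.sum_le_sum hpt).trans ((Finset.sum_le_sum_of_subset_of_nonneg hsub
    fun b _ _ => ?_).trans ?_)
  · have h1 := one_le_trunc_lin hP b
    have h2 := trunc_lin_mono hPQ hQ b
    have h3 : 0 ≤ trunc lin Q b ^ 2 - trunc lin P b ^ 2 := by nlinarith
    split_ifs <;> positivity
  rw [Finset.sum_add_distrib, ← Finset.mul_sum]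
  have h1 : 400 * B ^ 3 * (2 / B * (∏ p ∈ Q, (1 + quad p / p) - ∏ p ∈ P, (1 + quad p / p)))
      ≤ 400 * B ^ 3 * (2 / B * (1 / 10 ^ 6)) := by
    gcongr
    linarith
  have h2 : 400 * B ^ 3 * (2 / B * (1 / 10 ^ 6)) = 800 / 10 ^ 6 * B ^ 2 := by
    field_simp
    norm_num
  have h3 := mul_le_mul_of_nonneg_left htail (show 0 ≤ 400 * B ^ 3 by positivity)
  have h4 : (401 / 400 * B) ^ 2 / 2 * ∏ p ∈ P, (1 + lin p / p)
      ≤ (401 / 400 * B) ^ 2 / 2 * 1.9867 := by gcongr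
  have h5 : (M : ℝ) * B ≤ B ^ 2 / 10 ^ 6 := by nlinarith
  have h6 : (M : ℝ) ^ 2 ≤ B ^ 2 / 10 ^ 6 := by nlinarith
  nlinarith
end
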